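/- arXiv:1504.03609 — 4 statements merged into one kernel-verified Lean document; each statement's English description precedes it below -/
import Mathlib

section
/- Let N, M, n be positive integers, let B ∈ ℝ^{N×M} satisfy 1_Nᵀ B = 0, and for each i ∈ {1,…,N} let J_i ∈ ℝ^{n×n} be skew-symmetric and R_i ∈ ℝ^{n×n} symmetric positive definite. Suppose y* ∈ ℝ^n, μ ∈ ℝ^{nM} and d_1,…,d_N ∈ ℝ^n satisfy 0 = (J_i − R_i)y* − (B_i ⊗ I_n)μ + d_i for every i, where B_i denotes the i-th row of B. Then Σ_{i=1}^N (J_i − R_i) is invertible and y* = −(Σ_{i=1}^N (J_i − R_i))^{-1} Σ_{i=1}^N d_i. -/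
open Matrix

/-- if `1ᵀB = 0`, each `J_i` is skew-symmetric, each `R_i`
symmetric positive definite, and `0 = (J_i − R_i)y* − (B_i ⊗ I_n)μ + d_i`
for every `i`, then `Σ(J_i − R_i)` is invertible and
`y* = −(Σ(J_i − R_i))⁻¹ Σ d_i`. -/
theorem equilibrium_output_value {n N M : ℕ}
    (hn : 0 < n) (hN : 0 < N) (hM : 0 < M)
    (B : Matrix (Fin N) (Fin M) ℝ)
    (hB : ∀ k, ∑ i, B i k = 0)
    (J R : Fin N → Matrix (Fin n) (Fin n) ℝ)
    (hJ : ∀ i, (J i)ᵀ = -(J i)) (hR : ∀ i, (R i).PosDef)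
    (ystar : Fin n → ℝ) (μ : Fin M × Fin n → ℝ) (d : Fin N → Fin n → ℝ)
    (heq : ∀ i, (0 : Fin n → ℝ) =
      (J i - R i) *ᵥ ystar - (fun j => ∑ k, B i k * μ (k, j)) + d i) :
    IsUnit (∑ i, (J i - R i)) ∧
    ystar = -((∑ i, (J i - R i))⁻¹ *ᵥ (∑ i, d i)) := by
  have hJ0 : ∀ i (x : Fin n → ℝ), x ⬝ᵥ (J i *ᵥ x) = 0 := by
    intro i x
    have h1 : x ⬝ᵥ (J i *ᵥ x) = x ⬝ᵥ ((J i)ᵀ *ᵥ x) := by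
      rw [Matrix.mulVec_transpose, dotProduct_comm x (x ᵥ* J i), Matrix.dotProduct_mulVec]
    rw [hJ i, Matrix.neg_mulVec, dotProduct_neg] at h1
    linarith
  have hU : IsUnit (∑ i, (J i - R i)) := by
    rw [← Matrix.mulVec_injective_iff_isUnit]
    refine (injective_iff_map_eq_zero (∑ i, (J i - R i)).mulVecLin).2 ?_
    intro x hx
    rw [Matrix.mulVecLin_apply] at hx
    by_contra hne
    have h2 : x ⬝ᵥ ((∑ i, (J i - R i)) *ᵥ x) = 0 := by rw [hx, dotProduct_zero]
    rw [Matrix.sum_mulVec, dotProduct_sum] at h2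
    have h3 : ∑ i, x ⬝ᵥ ((J i - R i) *ᵥ x) < 0 := by
      refine Finset.sum_neg (fun i _ => ?_) ⟨⟨0, hN⟩, Finset.mem_univ _⟩
      have := (hR i).dotProduct_mulVec_pos hne
      rw [star_trivial] at this
      rw [Matrix.sub_mulVec, dotProduct_sub, hJ0]
      linarith
    linarith
  refine ⟨hU, ?_⟩
  have hs : (∑ i, (J i - R i)) *ᵥ ystar = -∑ i, d i := by
    have h0 : ∑ i, (fun j => ∑ k, B i k * μ (k, j)) = (0 : Fin n → ℝ) := by
      funext j
      rw [Finset.sum_apply, Finset.sum_comm]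
      simp [← Finset.sum_mul, hB]
    have h1 : ∑ i, ((J i - R i) *ᵥ ystar - (fun j => ∑ k, B i k * μ (k, j)) + d i) = 0 :=
      Finset.sum_eq_zero (fun i _ => (heq i).symm)
    rw [Finset.sum_add_distrib, Finset.sum_sub_distrib, h0, sub_zero, ← Matrix.sum_mulVec] at h1
    exact eq_neg_of_add_eq_zero_left h1
  rw [← Matrix.mulVec_neg, ← hs, Matrix.mulVec_mulVec,
    Matrix.nonsing_inv_mul _ ((Matrix.isUnit_iff_isUnit_det _).1 hU), Matrix.one_mulVec]
end

section
/- Theorem 1 (output agreement by attractivity of equilibria). Suppose (x̄, η̄) ∈ (Ω_n)^N × (Ω_e)^M is an equilibrium of the network. Then there exists an open set U of initial conditions containing (x̄, η̄) such that every solution (x, η) of the network with (x(0), η(0)) ∈ U is defined for all t ≥ 0, remains in (Ω_n)^N × (Ω_e)^M, and converges as t → ∞ to some equilibrium (x̃, η̃) of the network; consequently output agreement is achieved in the limit: G_iᵀ∇H_{n,i}(x̃_i) = G_jᵀ∇H_{n,j}(x̃_j) for all nodes i, j. -/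
open Matrix Filter Topology Set

/-- The gradient of `H : ℝ^p → ℝ` in coordinates: `(∇H(x))_j = DH(x)[e_j]`. -/
noncomputable def grad {p : ℕ} (H : (Fin p → ℝ) → ℝ) (x : Fin p → ℝ) : Fin p → ℝ :=
  fun j => fderiv ℝ H x (Pi.single j 1)


theorem oa_fderiv_eq {p : ℕ} (H : (Fin p → ℝ) → ℝ) (a v : Fin p → ℝ) :
    fderiv ℝ H a v = grad H a ⬝ᵥ v := by
  conv_lhs => rw [pi_eq_sum_univ' v]
  rw [map_sum]
  simp only [map_smul, smul_eq_mul, dotProduct, grad]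
  refine Finset.sum_congr rfl fun j _ => ?_
  rw [mul_comm]

theorem oa_grad_cont {p : ℕ} {H : (Fin p → ℝ) → ℝ} {Ω : Set (Fin p → ℝ)} (hO : IsOpen Ω)
    (hC : ContDiffOn ℝ 1 H Ω) : ContinuousOn (grad H) Ω := by
  have h := hC.continuousOn_fderiv_of_isOpen hO le_rfl
  refine continuousOn_pi.2 fun j => ?_
  exact h.clm_apply continuousOn_const

theorem oa_hasFDerivAt {p : ℕ} {H : (Fin p → ℝ) → ℝ} {Ω : Set (Fin p → ℝ)} (hO : IsOpen Ω)
    (hC : ContDiffOn ℝ 1 H Ω) {a : Fin p → ℝ} (ha : a ∈ Ω) :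
    HasFDerivAt H (fderiv ℝ H a) a :=
  ((hC.differentiableOn one_ne_zero).differentiableAt (hO.mem_nhds ha)).hasFDerivAt

/-- Bregman distance. -/
noncomputable def oaD {p : ℕ} (H : (Fin p → ℝ) → ℝ) (a y : Fin p → ℝ) : ℝ :=
  H y - H a - grad H a ⬝ᵥ (y - a)

theorem oaD_nonneg {p : ℕ} {H : (Fin p → ℝ) → ℝ} {Ω : Set (Fin p → ℝ)} (hO : IsOpen Ω)
    (hC : ContDiffOn ℝ 1 H Ω) (hconv : StrictConvexOn ℝ Ω H) {a y : Fin p → ℝ}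
    (ha : a ∈ Ω) (hy : y ∈ Ω) : 0 ≤ oaD H a y := by
  have hg : ConvexOn ℝ ((AffineMap.lineMap a y : ℝ →ᵃ[ℝ] (Fin p → ℝ)) ⁻¹' Ω)
      (H ∘ (AffineMap.lineMap a y : ℝ →ᵃ[ℝ] (Fin p → ℝ))) := hconv.convexOn.comp_affineMap _
  have hd : HasDerivAt (H ∘ (AffineMap.lineMap a y : ℝ →ᵃ[ℝ] (Fin p → ℝ)))
      (fderiv ℝ H a (y - a)) 0 := by
    have h1 : HasFDerivAt H (fderiv ℝ H a) ((AffineMap.lineMap a y : ℝ →ᵃ[ℝ] (Fin p → ℝ)) 0) := by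
      rw [AffineMap.lineMap_apply_zero]
      exact oa_hasFDerivAt hO hC ha
    exact h1.comp_hasDerivAt 0 AffineMap.hasDerivAt_lineMap
  have := hg.le_slope_of_hasDerivAt (x := 0) (y := 1) (by simpa using ha) (by simpa using hy)
    one_pos hd
  rw [oa_fderiv_eq] at this
  simp [slope_def_field] at this
  unfold oaD
  rw [dotProduct_sub]
  linarith

theorem oaD_pos {p : ℕ} {H : (Fin p → ℝ) → ℝ} {Ω : Set (Fin p → ℝ)} (hO : IsOpen Ω)
    (hC : ContDiffOn ℝ 1 H Ω) (hconv : StrictConvexOn ℝ Ω H) {a y : Fin p → ℝ}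
    (ha : a ∈ Ω) (hy : y ∈ Ω) (hne : y ≠ a) : 0 < oaD H a y := by
  have hmid : (1/2 : ℝ) • a + (1/2 : ℝ) • y ∈ Ω :=
    hconv.1 ha hy (by norm_num) (by norm_num) (by norm_num)
  have h1 := oaD_nonneg hO hC hconv ha hmid
  have h2 := hconv.2 ha hy hne.symm (show (0:ℝ) < 1/2 by norm_num)
    (show (0:ℝ) < 1/2 by norm_num) (by norm_num)
  have h3 : (1/2 : ℝ) • a + (1/2 : ℝ) • y - a = (1/2 : ℝ) • (y - a) := by
    ext i; simp; ring
  unfold oaD at h1 ⊢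
  rw [h3, dotProduct_smul] at h1
  simp only [smul_eq_mul] at h1 h2
  linarith

theorem oa_grad_inj {p : ℕ} {H : (Fin p → ℝ) → ℝ} {Ω : Set (Fin p → ℝ)} (hO : IsOpen Ω)
    (hC : ContDiffOn ℝ 1 H Ω) (hconv : StrictConvexOn ℝ Ω H) {a y : Fin p → ℝ}
    (ha : a ∈ Ω) (hy : y ∈ Ω) (h : grad H y = grad H a) : y = a := by
  by_contra hne
  have h1 := oaD_pos hO hC hconv ha hy hne
  have h2 := oaD_pos hO hC hconv hy ha (Ne.symm hne)
  unfold oaD at h1 h2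
  rw [h] at h2
  have : a - y = -(y - a) := by abel
  rw [this, dotProduct_neg] at h2
  linarith

theorem oaD_cont {p : ℕ} {H : (Fin p → ℝ) → ℝ} {Ω : Set (Fin p → ℝ)}
    (hC : ContDiffOn ℝ 1 H Ω) (a : Fin p → ℝ) : ContinuousOn (oaD H a) Ω := by
  unfold oaD
  refine (hC.continuousOn.sub continuousOn_const).sub ?_
  apply Continuous.continuousOn
  fun_prop

theorem oaD_deriv {p : ℕ} {H : (Fin p → ℝ) → ℝ} {Ω : Set (Fin p → ℝ)} (hO : IsOpen Ω)
    (hC : ContDiffOn ℝ 1 H Ω) (a : Fin p → ℝ) {y : ℝ → Fin p → ℝ} {y' : Fin p → ℝ} {s : Set ℝ}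
    {t : ℝ} (hy : y t ∈ Ω) (hd : HasDerivWithinAt y y' s t) :
    HasDerivWithinAt (fun τ => oaD H a (y τ)) ((grad H (y t) - grad H a) ⬝ᵥ y') s t := by
  have h1 := (oa_hasFDerivAt hO hC hy).comp_hasDerivWithinAt t hd
  rw [oa_fderiv_eq] at h1
  have h2 : HasDerivWithinAt (fun τ => grad H a ⬝ᵥ (y τ - a)) (grad H a ⬝ᵥ y') s t := by
    simp only [dotProduct]
    refine HasDerivWithinAt.fun_sum fun j _ => ?_
    have := (hasDerivWithinAt_pi.1 hd j)
    simpa using (this.sub_const (a j)).const_mul (grad H a j)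
  have := (h1.sub_const (H a)).sub h2
  rw [sub_dotProduct]
  exact this

/-- Barbalat. -/
theorem oa_barbalat {f f' : ℝ → ℝ} {l : ℝ}
    (hd : ∀ t ∈ Ici (0:ℝ), HasDerivWithinAt f (f' t) (Ici 0) t)
    (huc : UniformContinuousOn f' (Ici 0)) (hl : Tendsto f atTop (𝓝 l)) :
    Tendsto f' atTop (𝓝 0) := by
  rw [Metric.tendsto_atTop]
  intro ε hε
  obtain ⟨δ, hδ, hu⟩ := Metric.uniformContinuousOn_iff.1 huc (ε/2) (by positivity)
  set h := δ / 2 with hh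
  have hhpos : 0 < h := by positivity
  have ht : Tendsto (fun t => (f (t + h) - f t) / h) atTop (𝓝 0) := by
    have : Tendsto (fun t => (f (t + h) - f t) / h) atTop (𝓝 ((l - l) / h)) :=
      ((hl.comp (tendsto_atTop_add_const_right _ h tendsto_id)).sub hl).div_const h
    simpa using this
  obtain ⟨T, hT⟩ := Metric.tendsto_atTop.1 ht (ε/2) (by positivity)
  refine ⟨max T 0, fun t htT => ?_⟩
  have ht0 : 0 ≤ t := le_trans (le_max_right _ _) htT
  have h1 := hT t (le_trans (le_max_left _ _) htT)
  obtain ⟨c, hc, hc'⟩ := exists_hasDerivAt_eq_slope f f' (a := t) (b := t + h) (by linarith)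
    (fun s hs => ((hd s (ht0.trans hs.1)).continuousWithinAt).mono
      (fun u hu => ht0.trans hu.1))
    (fun s hs => (hd s (ht0.trans hs.1.le)).hasDerivAt (Ici_mem_nhds (lt_of_le_of_lt ht0 hs.1)))
  have h2 := hu c (ht0.trans hc.1.le) t ht0 (by
    rw [Real.dist_eq, abs_lt]; constructor <;> linarith [hc.1, hc.2])
  have h3 : (f (t+h) - f t) / (t + h - t) = (f (t+h) - f t)/h := by congr 1; ring
  rw [h3] at hc'
  rw [← hc'] at h1
  calc dist (f' t) 0 ≤ dist (f' c) (f' t) + dist (f' c) 0 := by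
        rw [dist_comm (f' c) (f' t)]; exact dist_triangle _ _ _
    _ < ε := by linarith

theorem oa_trap {Z : Type*} [TopologicalSpace Z] {z : ℝ → Z} {S C : Set Z}
    (hz : ContinuousOn z (Ici 0)) (hS : IsOpen S) (hC : IsClosed C) (hSC : S ⊆ C)
    (h0 : z 0 ∈ S) (hstep : ∀ T, 0 ≤ T → (∀ s ∈ Icc 0 T, z s ∈ C) → z T ∈ S) :
    ∀ t, 0 ≤ t → z t ∈ S := by
  intro t0 ht0
  by_contra hne
  have hcomp : IsCompact (Icc 0 t0 ∩ z ⁻¹' Sᶜ) := by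
    have := (hz.mono ((Icc_subset_Ici_self : Icc 0 t0 ⊆ Ici 0))).preimage_isClosed_of_isClosed isClosed_Icc
      hS.isClosed_compl
    exact isCompact_Icc.of_isClosed_subset this inter_subset_left
  obtain ⟨T, ⟨⟨hT0, hTt⟩, hTS⟩, hleast⟩ := hcomp.exists_isLeast ⟨t0, ⟨ht0, le_rfl⟩, hne⟩
  apply hTS
  have hlt : ∀ s, 0 ≤ s → s < T → z s ∈ S := by
    intro s hs hsT
    by_contra hns
    exact absurd (hleast ⟨⟨hs, hsT.le.trans hTt⟩, hns⟩) (not_le.2 hsT)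
  have hTpos : 0 < T := by
    rcases hT0.eq_or_lt with h | h
    · exact absurd (h ▸ h0) hTS
    · exact h
  refine hstep T hT0 fun s hs => ?_
  rcases hs.2.eq_or_lt with h | h
  · rw [h]
    have hcw : Tendsto z (𝓝[Ico 0 T] T) (𝓝 (z T)) :=
      (hz T hT0).mono (fun u hu => hu.1)
    have : (𝓝[Ico 0 T] T).NeBot := by
      rw [← mem_closure_iff_nhdsWithin_neBot, closure_Ico hTpos.ne]
      exact ⟨hT0, le_rfl⟩
    refine hC.mem_of_tendsto hcw ?_
    filter_upwards [self_mem_nhdsWithin] with u hu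
    exact hSC (hlt u hu.1 hu.2)
  · exact hSC (hlt s hs.1 h)

/-- A positive lower bound on a sphere. -/
theorem oa_sphere {p : ℕ} {Ω : Set (Fin p → ℝ)} {φ : (Fin p → ℝ) → ℝ} (hφ : ContinuousOn φ Ω)
    {a : Fin p → ℝ} {r : ℝ} (hr : 0 < r) (hsub : Metric.closedBall a r ⊆ Ω)
    (hpos : ∀ y ∈ Ω, y ≠ a → 0 < φ y) :
    ∃ c > 0, ∀ y ∈ Metric.sphere a r, c ≤ φ y := by
  by_cases hne : (Metric.sphere a r).Nonempty
  · obtain ⟨y, hy, hmin⟩ := (isCompact_sphere a r).exists_isMinOn hne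
      (hφ.mono (Metric.sphere_subset_closedBall.trans hsub))
    refine ⟨φ y, hpos y (hsub (Metric.sphere_subset_closedBall hy)) ?_, fun u hu => hmin hu⟩
    exact Metric.ne_of_mem_sphere hy hr.ne'
  · exact ⟨1, one_pos, fun y hy => absurd ⟨y, hy⟩ hne⟩

theorem oa_common {ι : Type*} [Finite ι] (P : ι → ℝ → Prop)
    (hmono : ∀ i a b, 0 < b → b ≤ a → P i a → P i b) (h : ∀ i, ∃ c > 0, P i c) :
    ∃ c > 0, ∀ i, P i c := by
  have : ∀ᶠ c in 𝓝[>] (0:ℝ), ∀ i, P i c := by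
    rw [eventually_all]
    intro i
    obtain ⟨c, hc, hP⟩ := h i
    filter_upwards [Ioc_mem_nhdsGT hc] with b hb
    exact hmono i c b hb.1 hb.2 hP
  obtain ⟨c, hc, hc'⟩ := (this.and self_mem_nhdsWithin).exists
  exact ⟨c, hc', hc⟩

/-- Bundled network data. -/
structure OANet (n m N M : ℕ) where
  B : Matrix (Fin N) (Fin M) ℝ
  J : Fin N → Matrix (Fin n) (Fin n) ℝ
  R : Fin N → Matrix (Fin n) (Fin n) ℝ
  hJ : ∀ i, (J i)ᵀ = -(J i)
  hR : ∀ i, (R i).PosDef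
  G : Fin N → Matrix (Fin n) (Fin m) ℝ
  d : Fin N → Fin m → ℝ
  Ωn : Set (Fin n → ℝ)
  hΩno : IsOpen Ωn
  Ωe : Set (Fin m → ℝ)
  hΩeo : IsOpen Ωe
  Hn : Fin N → (Fin n → ℝ) → ℝ
  hHnC : ∀ i, ContDiffOn ℝ 1 (Hn i) Ωn
  hHnconv : ∀ i, StrictConvexOn ℝ Ωn (Hn i)
  He : Fin M → (Fin m → ℝ) → ℝ
  hHeC : ∀ k, ContDiffOn ℝ 1 (He k) Ωe
  hHeconv : ∀ k, StrictConvexOn ℝ Ωe (He k)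
  I1 : Finset (Fin N)
  I2 : Finset (Fin N)
  hpart : I1 ∪ I2 = Finset.univ
  hdisj : Disjoint I1 I2

namespace OANet

variable {n m N M : ℕ} (S : OANet n m N M)

/-- Edge vector field in gradient coordinates. -/
def E (p : Fin N → Fin n → ℝ) (k : Fin M) : Fin m → ℝ :=
  ∑ i, S.B i k • ((S.G i)ᵀ *ᵥ p i)

/-- Node vector field in gradient coordinates. -/
def F (p : Fin N → Fin n → ℝ) (q : Fin M → Fin m → ℝ) (i : Fin N) : Fin n → ℝ :=
  (S.J i - S.R i) *ᵥ p i - (S.G i) *ᵥ (∑ k, S.B i k • q k) + (S.G i) *ᵥ S.d i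

/-- Node gradients. -/
noncomputable def gN (x : Fin N → Fin n → ℝ) : Fin N → Fin n → ℝ := fun i => grad (S.Hn i) (x i)

/-- Edge gradients. -/
noncomputable def gE (η : Fin M → Fin m → ℝ) : Fin M → Fin m → ℝ := fun k => grad (S.He k) (η k)

/-- Equilibrium. -/
def IsEq (a : Fin N → Fin n → ℝ) (b : Fin M → Fin m → ℝ) : Prop :=
  (∀ i, a i ∈ S.Ωn) ∧ (∀ k, b k ∈ S.Ωe) ∧ (∀ k, S.E (S.gN a) k = 0) ∧
    ∀ i, S.F (S.gN a) (S.gE b) i = 0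

/-- Solution. -/
def IsSol (x : ℝ → Fin N → Fin n → ℝ) (η : ℝ → Fin M → Fin m → ℝ) : Prop :=
  ContinuousOn (fun t => (x t, η t)) (Ici 0) ∧
  (∀ t ∈ Ici (0 : ℝ), ∀ k, HasDerivWithinAt (fun s => η s k) (S.E (S.gN (x t)) k) (Ici 0) t) ∧
  (∀ t ∈ Ici (0 : ℝ), ∀ i ∈ S.I1,
    HasDerivWithinAt (fun s => x s i) (S.F (S.gN (x t)) (S.gE (η t)) i) (Ici 0) t) ∧
  (∀ t ∈ Ici (0 : ℝ), ∀ i ∈ S.I2, S.F (S.gN (x t)) (S.gE (η t)) i = 0)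

/-- Dissipation. -/
def W (a p : Fin N → Fin n → ℝ) : ℝ := ∑ i, (p i - a i) ⬝ᵥ (S.R i *ᵥ (p i - a i))

/-- Lyapunov function. -/
noncomputable def V (a : Fin N → Fin n → ℝ) (b : Fin M → Fin m → ℝ) (x : Fin N → Fin n → ℝ)
    (η : Fin M → Fin m → ℝ) : ℝ :=
  ∑ i ∈ S.I1, oaD (S.Hn i) (a i) (x i) + ∑ k, oaD (S.He k) (b k) (η k)

variable {S}

theorem quadR_nonneg (i : Fin N) (v : Fin n → ℝ) : 0 ≤ v ⬝ᵥ (S.R i *ᵥ v) := by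
  by_cases hv : v = 0
  · simp [hv]
  · simpa using ((S.hR i).dotProduct_mulVec_pos hv).le

theorem quadR_eq_zero {i : Fin N} {v : Fin n → ℝ} (h : v ⬝ᵥ (S.R i *ᵥ v) = 0) : v = 0 := by
  by_contra hv
  have := (S.hR i).dotProduct_mulVec_pos hv
  simp only [star_trivial] at this
  linarith

theorem quadJ (i : Fin N) (v : Fin n → ℝ) : v ⬝ᵥ (S.J i *ᵥ v) = 0 := by
  have h1 : v ⬝ᵥ (S.J i *ᵥ v) = - (v ⬝ᵥ (S.J i *ᵥ v)) := by
    conv_lhs => rw [dotProduct_mulVec, ← mulVec_transpose, S.hJ, neg_mulVec, neg_dotProduct,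
      dotProduct_comm]
  linarith

theorem quadA (i : Fin N) (v : Fin n → ℝ) :
    v ⬝ᵥ ((S.J i - S.R i) *ᵥ v) = - (v ⬝ᵥ (S.R i *ᵥ v)) := by
  rw [sub_mulVec, dotProduct_sub, quadJ, zero_sub]

theorem A_unit (i : Fin N) : IsUnit (S.J i - S.R i) := by
  rw [← Matrix.mulVec_injective_iff_isUnit]
  intro u v huv
  have h : (S.J i - S.R i) *ᵥ (u - v) = 0 := by rw [mulVec_sub]; exact sub_eq_zero.2 huv
  have h2 := quadA (S := S) i (u - v)
  rw [h, dotProduct_zero] at h2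
  exact sub_eq_zero.1 (quadR_eq_zero (S := S) (i := i) (by linarith))

theorem A_inv (i : Fin N) (v : Fin n → ℝ) :
    (S.J i - S.R i)⁻¹ *ᵥ ((S.J i - S.R i) *ᵥ v) = v := by
  rw [mulVec_mulVec, Matrix.nonsing_inv_mul _ ((Matrix.isUnit_iff_isUnit_det _).1 (A_unit i)),
    one_mulVec]

theorem W_nonneg (a p : Fin N → Fin n → ℝ) : 0 ≤ S.W a p :=
  Finset.sum_nonneg fun i _ => quadR_nonneg i _

theorem W_eq_zero {a p : Fin N → Fin n → ℝ} (h : S.W a p = 0) : p = a := by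
  funext i
  have := (Finset.sum_eq_zero_iff_of_nonneg (fun i _ => quadR_nonneg (S := S) i _)).1 h i
    (Finset.mem_univ i)
  exact sub_eq_zero.1 (quadR_eq_zero this)

theorem F_diff {p0 p : Fin N → Fin n → ℝ} {q0 q : Fin M → Fin m → ℝ} {i : Fin N}
    (h0 : S.F p0 q0 i = 0) :
    S.F p q i = (S.J i - S.R i) *ᵥ (p i - p0 i) - S.G i *ᵥ (∑ k, S.B i k • (q k - q0 k)) := by
  have : S.F p q i = S.F p q i - S.F p0 q0 i := by rw [h0, sub_zero]
  rw [this]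
  unfold F
  simp only [smul_sub, Finset.sum_sub_distrib, mulVec_sub]
  abel

theorem E_diff {p0 p : Fin N → Fin n → ℝ} {k : Fin M} (h0 : S.E p0 k = 0) :
    S.E p k = ∑ i, S.B i k • ((S.G i)ᵀ *ᵥ (p i - p0 i)) := by
  have : S.E p k = S.E p k - S.E p0 k := by rw [h0, sub_zero]
  rw [this]
  unfold E
  simp only [mulVec_sub, smul_sub, Finset.sum_sub_distrib]

theorem dissip {p0 p : Fin N → Fin n → ℝ} {q0 q : Fin M → Fin m → ℝ}
    (hE : ∀ k, S.E p0 k = 0) (hF : ∀ i, S.F p0 q0 i = 0) (h2 : ∀ i ∈ S.I2, S.F p q i = 0) :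
    ∑ i ∈ S.I1, (p i - p0 i) ⬝ᵥ S.F p q i + ∑ k, (q k - q0 k) ⬝ᵥ S.E p k = - S.W p0 p := by
  have h1 : ∑ i ∈ S.I1, (p i - p0 i) ⬝ᵥ S.F p q i = ∑ i, (p i - p0 i) ⬝ᵥ S.F p q i := by
    rw [← S.hpart, Finset.sum_union S.hdisj]
    rw [Finset.sum_eq_zero (s := S.I2), add_zero]
    intro i hi
    rw [h2 i hi, dotProduct_zero]
  rw [h1]
  have h3 : ∀ i, (p i - p0 i) ⬝ᵥ S.F p q i = - ((p i - p0 i) ⬝ᵥ (S.R i *ᵥ (p i - p0 i))) -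
      ∑ k, S.B i k * (((S.G i)ᵀ *ᵥ (p i - p0 i)) ⬝ᵥ (q k - q0 k)) := by
    intro i
    rw [F_diff (hF i), dotProduct_sub, quadA, dotProduct_mulVec _ (S.G i),
      ← mulVec_transpose (S.G i), dotProduct_sum]
    simp only [dotProduct_smul, smul_eq_mul]
  have h4 : ∀ k, (q k - q0 k) ⬝ᵥ S.E p k =
      ∑ i, S.B i k * (((S.G i)ᵀ *ᵥ (p i - p0 i)) ⬝ᵥ (q k - q0 k)) := by
    intro k
    rw [E_diff (hE k), dotProduct_sum]
    refine Finset.sum_congr rfl fun i _ => ?_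
    rw [dotProduct_smul, smul_eq_mul, dotProduct_comm]
  simp only [h3, h4, Finset.sum_sub_distrib, Finset.sum_neg_distrib]
  rw [Finset.sum_comm (s := (Finset.univ : Finset (Fin M)))]
  unfold W
  ring

theorem V_deriv {a : Fin N → Fin n → ℝ} {b : Fin M → Fin m → ℝ} (hab : S.IsEq a b)
    {x : ℝ → Fin N → Fin n → ℝ} {η : ℝ → Fin M → Fin m → ℝ} (hs : S.IsSol x η) {t : ℝ}
    (ht : 0 ≤ t) (hx : ∀ i, x t i ∈ S.Ωn) (hη : ∀ k, η t k ∈ S.Ωe) :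
    HasDerivWithinAt (fun t => S.V a b (x t) (η t)) (-S.W (S.gN a) (S.gN (x t))) (Ici 0) t := by
  rw [← dissip hab.2.2.1 hab.2.2.2 (hs.2.2.2 t ht)]
  refine HasDerivWithinAt.add (HasDerivWithinAt.fun_sum fun i hi => ?_)
    (HasDerivWithinAt.fun_sum fun k _ => ?_)
  · exact oaD_deriv S.hΩno (S.hHnC i) (a i) (hx i) (hs.2.2.1 t ht i hi)
  · exact oaD_deriv S.hΩeo (S.hHeC k) (b k) (hη k) (hs.2.1 t ht k)

theorem V_anti {a : Fin N → Fin n → ℝ} {b : Fin M → Fin m → ℝ} (hab : S.IsEq a b)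
    {x : ℝ → Fin N → Fin n → ℝ} {η : ℝ → Fin M → Fin m → ℝ} (hs : S.IsSol x η) {D : Set ℝ}
    (hD : Convex ℝ D) (hD0 : D ⊆ Ici 0) (hx : ∀ t ∈ D, ∀ i, x t i ∈ S.Ωn)
    (hη : ∀ t ∈ D, ∀ k, η t k ∈ S.Ωe) :
    AntitoneOn (fun t => S.V a b (x t) (η t)) D := by
  refine antitoneOn_of_hasDerivWithinAt_nonpos (f' := fun t => -S.W (S.gN a) (S.gN (x t))) hD
    (fun t ht => ?_) (fun t ht => ?_) (fun t ht => ?_)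
  · exact ((V_deriv hab hs (hD0 ht) (hx t ht) (hη t ht)).continuousWithinAt).mono hD0
  · have ht' := interior_subset ht
    exact (V_deriv hab hs (hD0 ht') (hx t ht') (hη t ht')).mono (interior_subset.trans hD0)
  · have := W_nonneg (S := S) (S.gN a) (S.gN (x t))
    linarith

theorem V_self (a : Fin N → Fin n → ℝ) (b : Fin M → Fin m → ℝ) : S.V a b a b = 0 := by
  simp [V, oaD]

theorem V_ge_node {a : Fin N → Fin n → ℝ} {b : Fin M → Fin m → ℝ} (hab : S.IsEq a b)
    {x : Fin N → Fin n → ℝ} {η : Fin M → Fin m → ℝ} (hx : ∀ i, x i ∈ S.Ωn)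
    (hη : ∀ k, η k ∈ S.Ωe) {i : Fin N} (hi : i ∈ S.I1) :
    oaD (S.Hn i) (a i) (x i) ≤ S.V a b x η := by
  have h1 := Finset.single_le_sum (f := fun i => oaD (S.Hn i) (a i) (x i)) (s := S.I1)
    (fun j _ => oaD_nonneg S.hΩno (S.hHnC j) (S.hHnconv j) (hab.1 j) (hx j)) hi
  have h2 : 0 ≤ ∑ k, oaD (S.He k) (b k) (η k) := Finset.sum_nonneg
    (fun k _ => oaD_nonneg S.hΩeo (S.hHeC k) (S.hHeconv k) (hab.2.1 k) (hη k))
  unfold V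
  linarith

theorem V_nonneg {a : Fin N → Fin n → ℝ} {b : Fin M → Fin m → ℝ} (hab : S.IsEq a b)
    {x : Fin N → Fin n → ℝ} {η : Fin M → Fin m → ℝ} (hx : ∀ i, x i ∈ S.Ωn)
    (hη : ∀ k, η k ∈ S.Ωe) : 0 ≤ S.V a b x η :=
  add_nonneg (Finset.sum_nonneg
    fun j _ => oaD_nonneg S.hΩno (S.hHnC j) (S.hHnconv j) (hab.1 j) (hx j))
    (Finset.sum_nonneg
    (fun k _ => oaD_nonneg S.hΩeo (S.hHeC k) (S.hHeconv k) (hab.2.1 k) (hη k)))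

theorem V_ge_edge {a : Fin N → Fin n → ℝ} {b : Fin M → Fin m → ℝ} (hab : S.IsEq a b)
    {x : Fin N → Fin n → ℝ} {η : Fin M → Fin m → ℝ} (hx : ∀ i, x i ∈ S.Ωn)
    (hη : ∀ k, η k ∈ S.Ωe) (k : Fin M) :
    oaD (S.He k) (b k) (η k) ≤ S.V a b x η := by
  have h1 : 0 ≤ ∑ i ∈ S.I1, oaD (S.Hn i) (a i) (x i) := Finset.sum_nonneg
    (fun j _ => oaD_nonneg S.hΩno (S.hHnC j) (S.hHnconv j) (hab.1 j) (hx j))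
  have h2 := Finset.single_le_sum (f := fun k => oaD (S.He k) (b k) (η k)) (s := Finset.univ)
    (fun k _ => oaD_nonneg S.hΩeo (S.hHeC k) (S.hHeconv k) (hab.2.1 k) (hη k)) (Finset.mem_univ k)
  unfold V
  linarith

theorem gN_contAt {a : Fin N → Fin n → ℝ} (ha : ∀ i, a i ∈ S.Ωn) : ContinuousAt S.gN a :=
  continuousAt_pi.2 fun i => ContinuousAt.comp (f := fun x : Fin N → Fin n → ℝ => x i) (x := a)
    ((oa_grad_cont S.hΩno (S.hHnC i)).continuousAt (S.hΩno.mem_nhds (ha i)))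
    (continuous_apply i).continuousAt

theorem gE_contAt {b : Fin M → Fin m → ℝ} (hb : ∀ k, b k ∈ S.Ωe) : ContinuousAt S.gE b :=
  continuousAt_pi.2 fun k => ContinuousAt.comp (f := fun x : Fin M → Fin m → ℝ => x k) (x := b)
    ((oa_grad_cont S.hΩeo (S.hHeC k)).continuousAt (S.hΩeo.mem_nhds (hb k)))
    (continuous_apply k).continuousAt

theorem V_contAt {a : Fin N → Fin n → ℝ} {b : Fin M → Fin m → ℝ} (hab : S.IsEq a b) :
    ContinuousAt (fun z : (Fin N → Fin n → ℝ) × (Fin M → Fin m → ℝ) => S.V a b z.1 z.2)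
      (a, b) := by
  unfold V
  refine ContinuousAt.add (tendsto_finsetSum _ fun i _ => ?_) (tendsto_finsetSum _ fun k _ => ?_)
  · exact ContinuousAt.comp (f := fun z : (Fin N → Fin n → ℝ) × (Fin M → Fin m → ℝ) => z.1 i)
      (x := (a, b)) ((oaD_cont (S.hHnC i) (a i)).continuousAt (S.hΩno.mem_nhds (hab.1 i)))
      (by fun_prop)
  · exact ContinuousAt.comp (f := fun z : (Fin N → Fin n → ℝ) × (Fin M → Fin m → ℝ) => z.2 k)
      (x := (a, b)) ((oaD_cont (S.hHeC k) (b k)).continuousAt (S.hΩeo.mem_nhds (hab.2.1 k)))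
      (by fun_prop)

theorem radius {a : Fin N → Fin n → ℝ} {b : Fin M → Fin m → ℝ} (hab : S.IsEq a b) :
    ∃ r > 0, (∀ i, Metric.closedBall (a i) r ⊆ S.Ωn) ∧ ∀ k, Metric.closedBall (b k) r ⊆ S.Ωe := by
  obtain ⟨r1, h1, h1'⟩ := oa_common (fun i r => Metric.closedBall (a i) r ⊆ S.Ωn)
    (fun i c d _ h h' => (Metric.closedBall_subset_closedBall h).trans h')
    (fun i => Metric.nhds_basis_closedBall.mem_iff.1 (S.hΩno.mem_nhds (hab.1 i)))
  obtain ⟨r2, h2, h2'⟩ := oa_common (fun i r => Metric.closedBall (b i) r ⊆ S.Ωe)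
    (fun i c d _ h h' => (Metric.closedBall_subset_closedBall h).trans h')
    (fun i => Metric.nhds_basis_closedBall.mem_iff.1 (S.hΩeo.mem_nhds (hab.2.1 i)))
  exact ⟨min r1 r2, lt_min h1 h2,
    fun i => (Metric.closedBall_subset_closedBall (min_le_left _ _)).trans (h1' i),
    fun i => (Metric.closedBall_subset_closedBall (min_le_right _ _)).trans (h2' i)⟩

theorem alg_solve {p0 p : Fin N → Fin n → ℝ} {q0 q : Fin M → Fin m → ℝ} {i : Fin N}
    (h0 : S.F p0 q0 i = 0) (h : S.F p q i = 0) :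
    p i - p0 i = (S.J i - S.R i)⁻¹ *ᵥ (S.G i *ᵥ (∑ k, S.B i k • (q k - q0 k))) := by
  have := F_diff (p := p) (q := q) h0
  rw [h] at this
  rw [← sub_eq_zero.1 this.symm, A_inv]

theorem stable {a : Fin N → Fin n → ℝ} {b : Fin M → Fin m → ℝ} (hab : S.IsEq a b) {r' : ℝ}
    (hr' : 0 < r') :
    ∃ ρ > 0, ∀ x η, S.IsSol x η → (∀ i, x 0 i ∈ Metric.ball (a i) ρ) →
      (∀ k, η 0 k ∈ Metric.ball (b k) ρ) → ∀ t, 0 ≤ t →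
      (∀ i, x t i ∈ Metric.ball (a i) r') ∧ ∀ k, η t k ∈ Metric.ball (b k) r' := by
  obtain ⟨r0, hr0, hr0n, hr0e⟩ := radius hab
  set r := min r0 r' with hrdef
  have hr : 0 < r := lt_min hr0 hr'
  have hrn : ∀ i, Metric.closedBall (a i) r ⊆ S.Ωn := fun i =>
    (Metric.closedBall_subset_closedBall (min_le_left _ _)).trans (hr0n i)
  have hre : ∀ k, Metric.closedBall (b k) r ⊆ S.Ωe := fun i =>
    (Metric.closedBall_subset_closedBall (min_le_left _ _)).trans (hr0e i)
  -- lower bound for the gradients of algebraic nodes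
  obtain ⟨μ, hμ, hμ'⟩ := oa_common
    (fun i c => ∀ y ∈ Metric.sphere (a i) r, c ≤ ‖grad (S.Hn i) y - grad (S.Hn i) (a i)‖)
    (fun i c d _ h h' y hy => h.trans (h' y hy))
    (fun i => oa_sphere ((oa_grad_cont S.hΩno (S.hHnC i)).sub continuousOn_const).norm hr (hrn i)
      (fun y hy hne => norm_pos_iff.2 fun h0 => hne
        (oa_grad_inj S.hΩno (S.hHnC i) (S.hHnconv i) (hab.1 i) hy (sub_eq_zero.1 h0))))
  -- radius for the edge variables
  obtain ⟨s0, hs0, hs0'⟩ : ∃ s > 0, ∀ η ∈ Metric.closedBall b s, ∀ i,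
      ‖(S.J i - S.R i)⁻¹ *ᵥ (S.G i *ᵥ (∑ k, S.B i k • (S.gE η k - S.gE b k)))‖ < μ := by
    have hc : ∀ᶠ η in 𝓝 b, ∀ i,
        ‖(S.J i - S.R i)⁻¹ *ᵥ (S.G i *ᵥ (∑ k, S.B i k • (S.gE η k - S.gE b k)))‖ < μ := by
      rw [eventually_all]
      intro i
      have hΦ : Continuous (fun q : Fin M → Fin m → ℝ =>
          ‖(S.J i - S.R i)⁻¹ *ᵥ (S.G i *ᵥ (∑ k, S.B i k • (q k - S.gE b k)))‖) := by fun_prop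
      have h1 := hΦ.continuousAt.tendsto.comp (gE_contAt hab.2.1).tendsto
      refine h1.eventually (gt_mem_nhds ?_)
      simpa using hμ
    exact Metric.nhds_basis_closedBall.eventually_iff.1 hc
  set s := min r s0 with hsdef
  have hs : 0 < s := lt_min hr hs0
  have hse : ∀ k, Metric.closedBall (b k) s ⊆ S.Ωe := fun i =>
    (Metric.closedBall_subset_closedBall (min_le_left _ _)).trans (hre i)
  obtain ⟨c1, hc1, hc1'⟩ := oa_common
    (fun i c => ∀ y ∈ Metric.sphere (a i) r, c ≤ oaD (S.Hn i) (a i) y)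
    (fun i c d _ h h' y hy => h.trans (h' y hy))
    (fun i => oa_sphere (oaD_cont (S.hHnC i) (a i)) hr (hrn i)
      (fun y hy hne => oaD_pos S.hΩno (S.hHnC i) (S.hHnconv i) (hab.1 i) hy hne))
  obtain ⟨c2, hc2, hc2'⟩ := oa_common
    (fun i c => ∀ y ∈ Metric.sphere (b i) s, c ≤ oaD (S.He i) (b i) y)
    (fun i c d _ h h' y hy => h.trans (h' y hy))
    (fun i => oa_sphere (oaD_cont (S.hHeC i) (b i)) hs (hse i)
      (fun y hy hne => oaD_pos S.hΩeo (S.hHeC i) (S.hHeconv i) (hab.2.1 i) hy hne))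
  obtain ⟨ρ0, hρ0, hρ0'⟩ : ∃ ρ > 0, ∀ z ∈ Metric.ball (a, b) ρ, S.V a b z.1 z.2 < min c1 c2 := by
    have := (V_contAt hab).tendsto.eventually (gt_mem_nhds (show S.V a b a b < min c1 c2 by
      rw [V_self]; exact lt_min hc1 hc2))
    exact Metric.nhds_basis_ball.eventually_iff.1 this
  refine ⟨min ρ0 s, lt_min hρ0 hs, fun x η hsol hx0 hη0 => ?_⟩
  have hV0 : S.V a b (x 0) (η 0) < min c1 c2 := by
    refine hρ0' (x 0, η 0) ?_
    rw [← ball_prod_same]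
    refine ⟨?_, ?_⟩
    · rw [ball_pi _ hρ0]
      exact fun i _ => Metric.ball_subset_ball (min_le_left _ _) (hx0 i)
    · rw [ball_pi _ hρ0]
      exact fun i _ => Metric.ball_subset_ball (min_le_left _ _) (hη0 i)
  have key := oa_trap (z := fun t => (x t, η t)) (S := Metric.ball a r ×ˢ Metric.ball b s)
    (C := Metric.closedBall a r ×ˢ Metric.closedBall b s) hsol.1
    (Metric.isOpen_ball.prod Metric.isOpen_ball)
    (Metric.isClosed_closedBall.prod Metric.isClosed_closedBall)
    (Set.prod_mono Metric.ball_subset_closedBall Metric.ball_subset_closedBall) ?_ ?_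
  · intro t ht
    obtain ⟨h1, h2⟩ := key t ht
    rw [ball_pi _ hr] at h1
    rw [ball_pi _ hs] at h2
    exact ⟨fun i => Metric.ball_subset_ball (min_le_right _ _) (h1 i trivial),
      fun k => Metric.ball_subset_ball ((min_le_left _ _).trans (min_le_right _ _)) (h2 k trivial)⟩
  · refine ⟨?_, ?_⟩
    · rw [ball_pi _ hr]
      exact fun i _ => Metric.ball_subset_ball ((min_le_right _ _).trans (min_le_left _ _)) (hx0 i)
    · rw [ball_pi _ hs]
      exact fun i _ => Metric.ball_subset_ball (min_le_right _ _) (hη0 i)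
  · intro T hT hin
    have hxin : ∀ t ∈ Icc 0 T, ∀ i, x t i ∈ Metric.closedBall (a i) r := by
      intro t ht i
      have := (hin t ht).1
      rw [closedBall_pi _ hr.le] at this
      exact this i trivial
    have hηin : ∀ t ∈ Icc 0 T, ∀ k, η t k ∈ Metric.closedBall (b k) s := by
      intro t ht i
      have := (hin t ht).2
      rw [closedBall_pi _ hs.le] at this
      exact this i trivial
    have hTT : T ∈ Icc 0 T := ⟨hT, le_rfl⟩
    have hxT := fun i => hrn i (hxin T hTT i)
    have hηT := fun i => hse i (hηin T hTT i)
    have hVT : S.V a b (x T) (η T) < min c1 c2 :=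
      lt_of_le_of_lt (V_anti hab hsol (convex_Icc 0 T) (fun t ht => ht.1)
        (fun t ht i => hrn i (hxin t ht i)) (fun t ht i => hse i (hηin t ht i))
        ⟨le_rfl, hT⟩ hTT hT) hV0
    refine ⟨?_, ?_⟩
    · rw [ball_pi _ hr]
      intro i _
      by_contra hnot
      have hsph : x T i ∈ Metric.sphere (a i) r :=
        le_antisymm (hxin T hTT i) (not_lt.1 hnot)
      have hi : i ∈ S.I1 ∪ S.I2 := by rw [S.hpart]; exact Finset.mem_univ i
      rcases Finset.mem_union.1 hi with hi | hi
      · have h1 := hc1' i _ hsph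
        have h2 := V_ge_node hab hxT hηT hi
        have h3 := min_le_left c1 c2
        linarith
      · have h1 := hμ' i _ hsph
        have h2 := alg_solve (hab.2.2.2 i) (hsol.2.2.2 T hT i hi)
        have h3 := hs0' (η T)
          (Metric.closedBall_subset_closedBall (min_le_right _ _) (hin T hTT).2) i
        rw [← h2] at h3
        exact absurd h1 (not_le.2 h3)
    · rw [ball_pi _ hs]
      intro k _
      by_contra hnot
      have hsph : η T k ∈ Metric.sphere (b k) s :=
        le_antisymm (hηin T hTT k) (not_lt.1 hnot)
      have h1 := hc2' k _ hsph
      have h2 := V_ge_edge hab hxT hηT k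
      have h3 := min_le_right c1 c2
      linarith

theorem _root_.oa_uc_pi {ι : Type*} [Fintype ι] {q : ℕ} {f : ℝ → ι → Fin q → ℝ} {s : Set ℝ}
    (h : ∀ i, UniformContinuousOn (fun t => f t i) s) : UniformContinuousOn f s := by
  rw [uniformContinuousOn_iff_restrict, uniformContinuous_pi]
  exact fun i => uniformContinuousOn_iff_restrict.1 (h i)

theorem _root_.oa_uc_of_deriv {q : ℕ} {f f' : ℝ → Fin q → ℝ} {C : ℝ}
    (hd : ∀ t ∈ Ici (0:ℝ), HasDerivWithinAt f (f' t) (Ici 0) t)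
    (hC : ∀ t ∈ Ici (0:ℝ), ‖f' t‖ ≤ C) : UniformContinuousOn f (Ici 0) := by
  refine (Convex.lipschitzOnWith_of_nnnorm_hasDerivWithin_le (C := C.toNNReal) (convex_Ici 0) hd
    fun t ht => ?_).uniformContinuousOn
  rw [← NNReal.coe_le_coe, coe_nnnorm]
  exact (hC t ht).trans (Real.le_coe_toNNReal C)

theorem F_cont (i : Fin N) :
    Continuous fun z : (Fin N → Fin n → ℝ) × (Fin M → Fin m → ℝ) => S.F z.1 z.2 i := by
  unfold F
  fun_prop

theorem E_cont (k : Fin M) :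
    Continuous fun z : (Fin N → Fin n → ℝ) × (Fin M → Fin m → ℝ) => S.E z.1 k := by
  unfold E
  fun_prop

theorem W_cont (a : Fin N → Fin n → ℝ) : Continuous fun p => S.W a p := by
  unfold W
  fun_prop

set_option maxHeartbeats 600000 in
theorem converge {a : Fin N → Fin n → ℝ} {b : Fin M → Fin m → ℝ} (hab : S.IsEq a b) {r : ℝ}
    (hr : 0 < r) (hrn : ∀ i, Metric.closedBall (a i) r ⊆ S.Ωn)
    (hre : ∀ k, Metric.closedBall (b k) r ⊆ S.Ωe)
    {x : ℝ → Fin N → Fin n → ℝ} {η : ℝ → Fin M → Fin m → ℝ} (hsol : S.IsSol x η)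
    (hx : ∀ t, 0 ≤ t → ∀ i, x t i ∈ Metric.closedBall (a i) r)
    (hη : ∀ t, 0 ≤ t → ∀ k, η t k ∈ Metric.closedBall (b k) r) :
    Tendsto x atTop (𝓝 a) ∧ ∃ b', S.IsEq a b' ∧ Tendsto η atTop (𝓝 b') := by
  have hKn : ∀ y ∈ Metric.closedBall a r, ∀ i, y i ∈ S.Ωn := by
    intro y hy i
    rw [closedBall_pi _ hr.le] at hy
    exact hrn i (hy i trivial)
  have hKe : ∀ y ∈ Metric.closedBall b r, ∀ i, y i ∈ S.Ωe := by
    intro y hy i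
    rw [closedBall_pi _ hr.le] at hy
    exact hre i (hy i trivial)
  have hxK : ∀ t, 0 ≤ t → x t ∈ Metric.closedBall a r := by
    intro t ht
    rw [closedBall_pi _ hr.le]
    exact fun i _ => hx t ht i
  have hηK : ∀ t, 0 ≤ t → η t ∈ Metric.closedBall b r := by
    intro t ht
    rw [closedBall_pi _ hr.le]
    exact fun i _ => hη t ht i
  have hgN : ContinuousOn S.gN (Metric.closedBall a r) := fun y hy =>
    (gN_contAt (hKn y hy)).continuousWithinAt
  have hgE : ContinuousOn S.gE (Metric.closedBall b r) := fun y hy =>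
    (gE_contAt (hKe y hy)).continuousWithinAt
  have hPQ : IsCompact ((S.gN '' Metric.closedBall a r) ×ˢ (S.gE '' Metric.closedBall b r)) :=
    ((isCompact_closedBall a r).image_of_continuousOn hgN).prod
      ((isCompact_closedBall b r).image_of_continuousOn hgE)
  have hmaps : MapsTo (fun t => (S.gN (x t), S.gE (η t))) (Ici 0)
      ((S.gN '' Metric.closedBall a r) ×ˢ (S.gE '' Metric.closedBall b r)) :=
    fun t ht => ⟨⟨_, hxK t ht, rfl⟩, ⟨_, hηK t ht, rfl⟩⟩
  -- uniform continuity of the differential variables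
  have hηuc : UniformContinuousOn η (Ici 0) := by
    apply oa_uc_pi
    intro k
    obtain ⟨C, hC⟩ := hPQ.exists_bound_of_continuousOn (E_cont (S := S) k).continuousOn
    exact oa_uc_of_deriv (f' := fun t => S.E (S.gN (x t)) k) (C := C)
      (fun t ht => hsol.2.1 t ht k) (fun t ht => hC (S.gN (x t), S.gE (η t)) (hmaps ht))
  have hxuc : ∀ i ∈ S.I1, UniformContinuousOn (fun t => x t i) (Ici 0) := by
    intro i hi
    obtain ⟨C, hC⟩ := hPQ.exists_bound_of_continuousOn (F_cont (S := S) i).continuousOn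
    exact oa_uc_of_deriv (f' := fun t => S.F (S.gN (x t)) (S.gE (η t)) i) (C := C)
      (fun t ht => hsol.2.2.1 t ht i hi) (fun t ht => hC (S.gN (x t), S.gE (η t)) (hmaps ht))
  have hgEuc : UniformContinuousOn (fun t => S.gE (η t)) (Ici 0) :=
    ((isCompact_closedBall b r).uniformContinuousOn_of_continuous hgE).comp hηuc
      (fun t ht => hηK t ht)
  have hgNuc : UniformContinuousOn (fun t => S.gN (x t)) (Ici 0) := by
    apply oa_uc_pi
    intro i
    have hi : i ∈ S.I1 ∪ S.I2 := by rw [S.hpart]; exact Finset.mem_univ i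
    rcases Finset.mem_union.1 hi with hi | hi
    · exact ((isCompact_closedBall (a i) r).uniformContinuousOn_of_continuous
        ((oa_grad_cont S.hΩno (S.hHnC i)).mono (hrn i))).comp (hxuc i hi) (fun t ht => hx t ht i)
    · have hΦ : Continuous (fun q : Fin M → Fin m → ℝ =>
          (S.J i - S.R i)⁻¹ *ᵥ (S.G i *ᵥ (∑ k, S.B i k • (q k - S.gE b k))) + S.gN a i) := by
        fun_prop
      have h1 : UniformContinuousOn (fun t => (S.J i - S.R i)⁻¹ *ᵥ (S.G i *ᵥ
          (∑ k, S.B i k • (S.gE (η t) k - S.gE b k))) + S.gN a i) (Ici 0) :=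
        (((isCompact_closedBall b r).image_of_continuousOn
        hgE).uniformContinuousOn_of_continuous hΦ.continuousOn).comp hgEuc
        (fun t ht => ⟨_, hηK t ht, rfl⟩)
      apply h1.congr
      intro t ht
      have h2 := alg_solve (hab.2.2.2 i) (hsol.2.2.2 t ht i hi)
      show _ + S.gN a i = S.gN (x t) i
      rw [← h2, sub_add_cancel]
  have hpuc : UniformContinuousOn (fun t => (S.gN (x t), S.gE (η t))) (Ici 0) := by
    rw [uniformContinuousOn_iff_restrict] at hgNuc hgEuc ⊢
    exact hgNuc.prodMk hgEuc
  -- the dissipation tends to zero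
  have hVl : ∃ l, Tendsto (fun t => S.V a b (x t) (η t)) atTop (𝓝 l) := by
    have hanti := V_anti hab hsol (convex_Ici 0) subset_rfl (fun t ht => hKn _ (hxK t ht))
      (fun t ht => hKe _ (hηK t ht))
    have hanti' : Antitone (fun t => S.V a b (x (max t 0)) (η (max t 0))) := by
      intro s t hst
      exact hanti (mem_Ici.2 (le_max_right s 0)) (mem_Ici.2 (le_max_right t 0))
        (max_le_max_right 0 hst)
    refine ⟨_, (tendsto_atTop_ciInf hanti' ⟨0, ?_⟩).congr' ?_⟩
    · rintro _ ⟨t, rfl⟩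
      exact V_nonneg hab (hKn _ (hxK _ (le_max_right _ _))) (hKe _ (hηK _ (le_max_right _ _)))
    · filter_upwards [eventually_ge_atTop 0] with t ht
      rw [max_eq_left ht]
  obtain ⟨l, hl⟩ := hVl
  have hWc : Continuous fun z : (Fin N → Fin n → ℝ) × (Fin M → Fin m → ℝ) =>
      -S.W (S.gN a) z.1 := by
    have h := W_cont (S := S) (S.gN a)
    fun_prop
  have hWuc : UniformContinuousOn (fun t => -S.W (S.gN a) (S.gN (x t))) (Ici 0) :=
    UniformContinuousOn.comp (g := fun z : (Fin N → Fin n → ℝ) × (Fin M → Fin m → ℝ) =>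
      -S.W (S.gN a) z.1) (f := fun t => (S.gN (x t), S.gE (η t)))
      (hPQ.uniformContinuousOn_of_continuous hWc.continuousOn) hpuc hmaps
  have hW : Tendsto (fun t => -S.W (S.gN a) (S.gN (x t))) atTop (𝓝 0) :=
    oa_barbalat (f := fun t => S.V a b (x t) (η t))
      (f' := fun t => -S.W (S.gN a) (S.gN (x t))) (fun t ht => V_deriv hab hsol ht (hKn _ (hxK t ht)) (hKe _ (hηK t ht)))
      hWuc hl
  have hxlim : Tendsto x atTop (𝓝 a) := by
    refine (isCompact_closedBall a r).tendsto_nhds_of_unique_mapClusterPt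
      (by filter_upwards [eventually_ge_atTop 0] with t ht using hxK t ht) fun y hy hcl => ?_
    have hWn : Continuous fun p => -S.W (S.gN a) p := (W_cont (S := S) (S.gN a)).neg
    have hcl' := hcl.continuousAt_comp
      (f := fun y => -S.W (S.gN a) (S.gN y))
      (hWn.continuousAt.comp (gN_contAt (hKn y hy)))
    have h0 : -S.W (S.gN a) (S.gN y) = 0 := by
      have hne : (𝓝 (-S.W (S.gN a) (S.gN y)) ⊓ 𝓝 (0:ℝ)).NeBot :=
        NeBot.mono hcl' (inf_le_inf_left _ hW)
      exact eq_of_nhds_neBot hne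
    have h1 := W_eq_zero (neg_eq_zero.1 h0)
    funext i
    exact oa_grad_inj S.hΩno (S.hHnC i) (S.hHnconv i) (hab.1 i) (hKn y hy i) (congrFun h1 i)
  -- the node vector field tends to zero
  have hF0 : ∀ i, Tendsto (fun t => S.F (S.gN (x t)) (S.gE (η t)) i) atTop (𝓝 0) := by
    intro i
    have hi : i ∈ S.I1 ∪ S.I2 := by rw [S.hpart]; exact Finset.mem_univ i
    rcases Finset.mem_union.1 hi with hi | hi
    · refine tendsto_pi_nhds.2 fun j => ?_
      have hFc : Continuous fun z : (Fin N → Fin n → ℝ) × (Fin M → Fin m → ℝ) =>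
        S.F z.1 z.2 i j := (continuous_apply j).comp (F_cont (S := S) i)
      have hFuc : UniformContinuousOn (fun t => S.F (S.gN (x t)) (S.gE (η t)) i j) (Ici 0) :=
        UniformContinuousOn.comp (g := fun z : (Fin N → Fin n → ℝ) × (Fin M → Fin m → ℝ) =>
          S.F z.1 z.2 i j) (f := fun t => (S.gN (x t), S.gE (η t)))
          (hPQ.uniformContinuousOn_of_continuous hFc.continuousOn) hpuc hmaps
      exact oa_barbalat (f := fun t => x t i j) (l := a i j)
        (f' := fun t => S.F (S.gN (x t)) (S.gE (η t)) i j)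
        (fun t ht => hasDerivWithinAt_pi.1 (hsol.2.2.1 t ht i hi) j)
        hFuc
        (tendsto_pi_nhds.1 (tendsto_pi_nhds.1 hxlim i) j)
    · refine tendsto_const_nhds.congr' ?_
      filter_upwards [eventually_ge_atTop 0] with t ht
      exact (hsol.2.2.2 t ht i hi).symm
  -- a limit point of the edge variables
  refine ⟨hxlim, ?_⟩
  let u : Ultrafilter ℝ := Ultrafilter.of atTop
  have hu : (u : Filter ℝ) ≤ atTop := Ultrafilter.of_le atTop
  obtain ⟨b', hb'K, hb'⟩ := (isCompact_closedBall b r).ultrafilter_le_nhds (u.map η) (by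
    rw [le_principal_iff]
    have : ∀ᶠ t in (u : Filter ℝ), η t ∈ Metric.closedBall b r := by
      filter_upwards [hu (eventually_ge_atTop 0)] with t ht using hηK t ht
    exact this)
  have hηu : Tendsto η u (𝓝 b') := hb'
  have hxu : Tendsto x u (𝓝 a) := hxlim.mono_left hu
  have hb'e : ∀ k, b' k ∈ S.Ωe := hKe b' hb'K
  have hab' : S.IsEq a b' := by
    refine ⟨hab.1, hb'e, hab.2.2.1, fun i => ?_⟩
    have hz : Tendsto (fun t => (S.gN (x t), S.gE (η t))) u (𝓝 (S.gN a, S.gE b')) :=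
      ((gN_contAt hab.1).tendsto.comp hxu).prodMk_nhds ((gE_contAt hb'e).tendsto.comp hηu)
    have h1 : Tendsto (fun t => S.F (S.gN (x t)) (S.gE (η t)) i) u
        (𝓝 (S.F (S.gN a) (S.gE b') i)) :=
      Tendsto.comp (g := fun z : (Fin N → Fin n → ℝ) × (Fin M → Fin m → ℝ) => S.F z.1 z.2 i)
        (f := fun t => (S.gN (x t), S.gE (η t)))
        ((F_cont (S := S) i).tendsto (S.gN a, S.gE b')) hz
    exact tendsto_nhds_unique h1 ((hF0 i).mono_left hu)
  refine ⟨b', hab', ?_⟩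
  rw [Metric.tendsto_atTop]
  intro ε hε
  obtain ⟨ρ, hρ, hstab⟩ := stable hab' hε
  have hev : ∀ᶠ t in (u : Filter ℝ), 0 ≤ t ∧ x t ∈ Metric.ball a ρ ∧ η t ∈ Metric.ball b' ρ :=
    ((eventually_ge_atTop 0).filter_mono hu).and
      ((hxu.eventually (Metric.ball_mem_nhds a hρ)).and
        (hηu.eventually (Metric.ball_mem_nhds b' hρ)))
  obtain ⟨T, hT, hxT, hηT⟩ := hev.exists
  have hshift : S.IsSol (fun t => x (t + T)) (fun t => η (t + T)) := by
    have hm : MapsTo (fun t : ℝ => t + T) (Ici 0) (Ici 0) := fun t ht => by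
      simp only [mem_Ici] at ht ⊢; linarith
    refine ⟨?_, ?_, ?_, ?_⟩
    · exact hsol.1.comp (by fun_prop) hm
    · intro t ht k
      have h1 := HasDerivWithinAt.scomp t (hsol.2.1 (t + T) (hm ht) k)
        ((hasDerivWithinAt_id t (Ici 0)).add_const T) hm
      simpa [Function.comp_def] using h1
    · intro t ht k hk
      have h1 := HasDerivWithinAt.scomp t (hsol.2.2.1 (t + T) (hm ht) k hk)
        ((hasDerivWithinAt_id t (Ici 0)).add_const T) hm
      simpa [Function.comp_def] using h1
    · exact fun t ht i hi => hsol.2.2.2 (t + T) (hm ht) i hi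
  have hfin := hstab _ _ hshift
    (by rw [ball_pi _ hρ] at hxT; simpa using hxT) (by rw [ball_pi _ hρ] at hηT; simpa using hηT)
  refine ⟨T, fun t ht => ?_⟩
  have h1 := (hfin (t - T) (by linarith)).2
  simp only [sub_add_cancel] at h1
  exact (dist_pi_lt_iff hε).2 h1

end OANet

theorem oa_agree {m N M : ℕ} (B : Matrix (Fin N) (Fin M) ℝ)
    (hBker : LinearMap.ker (Matrix.mulVecLin Bᵀ) =
      Submodule.span ℝ {(fun _ => (1 : ℝ) : Fin N → ℝ)})
    (y : Fin N → Fin m → ℝ) (h : ∀ k, ∑ i, B i k • y i = 0) (i j : Fin N) : y i = y j := by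
  funext l
  have hmem : (fun i => y i l) ∈ LinearMap.ker (Matrix.mulVecLin Bᵀ) := by
    rw [LinearMap.mem_ker]
    funext k
    have := congrFun (h k) l
    simp only [Finset.sum_apply, Pi.smul_apply, smul_eq_mul, Pi.zero_apply] at this
    exact this
  rw [hBker, Submodule.mem_span_singleton] at hmem
  obtain ⟨c, hc⟩ := hmem
  have h1 := congrFun hc i
  have h2 := congrFun hc j
  simp only [Pi.smul_apply] at h1 h2
  rw [← h1, ← h2]

/-- Theorem 1: any equilibrium `(x̄, η̄)` of the heterogeneous
differential-algebraic network is locally attractive: there is an open set `U`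
of initial conditions around it such that every solution starting in `U`
remains in `(Ω_n)^N × (Ω_e)^M` and converges to an equilibrium of the network,
at which output agreement `G_iᵀ∇H_{n,i} = G_jᵀ∇H_{n,j}` holds. -/
theorem output_agreement_attractivity
    {n m N M : ℕ} (hn : 0 < n) (hm : 0 < m) (hN : 0 < N) (hM : 0 < M)
    (B : Matrix (Fin N) (Fin M) ℝ)
    (hB1 : ∀ k, ∑ i, B i k = 0)
    (hBker : LinearMap.ker (Matrix.mulVecLin Bᵀ) =
      Submodule.span ℝ {(fun _ => (1 : ℝ) : Fin N → ℝ)})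
    (J R : Fin N → Matrix (Fin n) (Fin n) ℝ)
    (hJ : ∀ i, (J i)ᵀ = -(J i)) (hR : ∀ i, (R i).PosDef)
    (G : Fin N → Matrix (Fin n) (Fin m) ℝ)
    (d : Fin N → Fin m → ℝ)
    (Ωn : Set (Fin n → ℝ)) (hΩno : IsOpen Ωn) (hΩnc : Convex ℝ Ωn)
    (Ωe : Set (Fin m → ℝ)) (hΩeo : IsOpen Ωe) (hΩec : Convex ℝ Ωe)
    (Hn : Fin N → (Fin n → ℝ) → ℝ)
    (hHnC : ∀ i, ContDiffOn ℝ 1 (Hn i) Ωn)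
    (hHnconv : ∀ i, StrictConvexOn ℝ Ωn (Hn i))
    (He : Fin M → (Fin m → ℝ) → ℝ)
    (hHeC : ∀ k, ContDiffOn ℝ 1 (He k) Ωe)
    (hHeconv : ∀ k, StrictConvexOn ℝ Ωe (He k))
    (I1 I2 : Finset (Fin N))
    (hpart : I1 ∪ I2 = Finset.univ) (hdisj : Disjoint I1 I2)
    (xbar : Fin N → Fin n → ℝ) (ηbar : Fin M → Fin m → ℝ)
    (hxbar : ∀ i, xbar i ∈ Ωn) (hηbar : ∀ k, ηbar k ∈ Ωe)
    (heq1 : ∀ k, ∑ i, B i k • ((G i)ᵀ *ᵥ grad (Hn i) (xbar i)) = 0)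
    (heq2 : ∀ i, (0 : Fin n → ℝ) =
      (J i - R i) *ᵥ grad (Hn i) (xbar i)
        - (G i) *ᵥ (∑ k, B i k • grad (He k) (ηbar k)) + (G i) *ᵥ d i) :
    ∃ U : Set ((Fin N → Fin n → ℝ) × (Fin M → Fin m → ℝ)),
      IsOpen U ∧ (xbar, ηbar) ∈ U ∧
      ∀ (x : ℝ → Fin N → Fin n → ℝ) (η : ℝ → Fin M → Fin m → ℝ),
        -- (x, η) is a solution of the network on [0, ∞):
        ContinuousOn (fun t => (x t, η t)) (Ici 0) →
        (∀ t ∈ Ici (0 : ℝ), ∀ k,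
          HasDerivWithinAt (fun s => η s k)
            (∑ i, B i k • ((G i)ᵀ *ᵥ grad (Hn i) (x t i))) (Ici 0) t) →
        (∀ t ∈ Ici (0 : ℝ), ∀ i ∈ I1,
          HasDerivWithinAt (fun s => x s i)
            ((J i - R i) *ᵥ grad (Hn i) (x t i)
              - (G i) *ᵥ (∑ k, B i k • grad (He k) (η t k)) + (G i) *ᵥ d i)
            (Ici 0) t) →
        (∀ t ∈ Ici (0 : ℝ), ∀ i ∈ I2,
          (0 : Fin n → ℝ) = (J i - R i) *ᵥ grad (Hn i) (x t i)
            - (G i) *ᵥ (∑ k, B i k • grad (He k) (η t k)) + (G i) *ᵥ d i) →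
        -- starting in U:
        (x 0, η 0) ∈ U →
        -- it remains in the region and converges to an equilibrium with agreement:
        (∀ t ∈ Ici (0 : ℝ), (∀ i, x t i ∈ Ωn) ∧ (∀ k, η t k ∈ Ωe)) ∧
        ∃ (xt : Fin N → Fin n → ℝ) (ηt : Fin M → Fin m → ℝ),
          (∀ i, xt i ∈ Ωn) ∧ (∀ k, ηt k ∈ Ωe) ∧
          (∀ k, ∑ i, B i k • ((G i)ᵀ *ᵥ grad (Hn i) (xt i)) = 0) ∧
          (∀ i, (0 : Fin n → ℝ) = (J i - R i) *ᵥ grad (Hn i) (xt i)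
            - (G i) *ᵥ (∑ k, B i k • grad (He k) (ηt k)) + (G i) *ᵥ d i) ∧
          Tendsto x atTop (𝓝 xt) ∧ Tendsto η atTop (𝓝 ηt) ∧
          ∀ i j, (G i)ᵀ *ᵥ grad (Hn i) (xt i) = (G j)ᵀ *ᵥ grad (Hn j) (xt j) := by

  let S : OANet n m N M := ⟨B, J, R, hJ, hR, G, d, Ωn, hΩno, Ωe, hΩeo, Hn, hHnC, hHnconv,
    He, hHeC, hHeconv, I1, I2, hpart, hdisj⟩
  have hab : S.IsEq xbar ηbar := ⟨hxbar, hηbar, heq1, fun i => (heq2 i).symm⟩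
  obtain ⟨r, hr, hrn, hre⟩ := OANet.radius hab
  obtain ⟨ρ, hρ, hstab⟩ := OANet.stable hab hr
  refine ⟨Metric.ball (xbar, ηbar) ρ, Metric.isOpen_ball, Metric.mem_ball_self hρ, ?_⟩
  intro x η hcont hη hx halg h0
  have hsol : S.IsSol x η := ⟨hcont, hη, hx, fun t ht i hi => (halg t ht i hi).symm⟩
  rw [← ball_prod_same, ball_pi _ hρ, ball_pi _ hρ] at h0
  have hst := hstab x η hsol (fun i => h0.1 i trivial) (fun k => h0.2 k trivial)
  have hxb : ∀ t, 0 ≤ t → ∀ i, x t i ∈ Metric.closedBall (xbar i) r :=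
    fun t ht i => Metric.ball_subset_closedBall ((hst t ht).1 i)
  have hηb : ∀ t, 0 ≤ t → ∀ k, η t k ∈ Metric.closedBall (ηbar k) r :=
    fun t ht k => Metric.ball_subset_closedBall ((hst t ht).2 k)
  refine ⟨fun t ht => ⟨fun i => hrn i (hxb t ht i), fun k => hre k (hηb t ht k)⟩, ?_⟩
  obtain ⟨hxl, b', hb', hηl⟩ := OANet.converge hab hr hrn hre hsol hxb hηb
  exact ⟨xbar, b', hb'.1, hb'.2.1, hb'.2.2.1, fun i => (hb'.2.2.2 i).symm, hxl, hηl,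
    fun i j => oa_agree B hBker (fun i => (G i)ᵀ *ᵥ grad (Hn i) (xbar i)) heq1 i j⟩
end

section
/- In the network model, suppose G_i = I_n for all i (so m = n), and suppose (x̄, η̄) and (x̃, η̃) are two equilibria with x̄, x̃ ∈ (Ω_n)^N. Then x̄ = x̃; moreover the common output value is ∇H_{n,i}(x̄_i) = y* for all i, with y* = −(Σ_{i=1}^N (J_i − R_i))^{-1} Σ_{i=1}^N d_i. -/
open Matrix Set

theorem grad_inj_aux {p : ℕ} (H : (Fin p → ℝ) → ℝ) (Ω : Set (Fin p → ℝ)) (hΩ : IsOpen Ω)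
    (hC : ContDiffOn ℝ 1 H Ω) (hc : StrictConvexOn ℝ Ω H) {x y : Fin p → ℝ}
    (hx : x ∈ Ω) (hy : y ∈ Ω) (h : grad H x = grad H y) : x = y := by
  by_contra hne
  have hfd : fderiv ℝ H x = fderiv ℝ H y := by
    apply ContinuousLinearMap.coe_injective
    apply LinearMap.pi_ext'
    intro j
    apply LinearMap.ext_ring
    simpa [grad] using congrFun h j
  have hd : ∀ z ∈ Ω, HasFDerivAt H (fderiv ℝ H z) z := fun z hz =>
    ((hC.differentiableOn one_ne_zero).differentiableAt (hΩ.mem_nhds hz)).hasFDerivAt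
  have hconv : StrictConvexOn ℝ (Set.Icc (0:ℝ) 1) (fun t => H (x + t • (y - x))) := by
    refine ⟨convex_Icc 0 1, ?_⟩
    intro s hs t ht hst a b ha hb hab
    have hm : ∀ r ∈ Set.Icc (0:ℝ) 1, x + r • (y - x) ∈ Ω := fun r hr =>
      hc.1.add_smul_sub_mem hx hy hr
    have hne' : x + s • (y - x) ≠ x + t • (y - x) := by
      intro h1
      have h2 := add_left_cancel h1
      exact hst (smul_left_injective ℝ (sub_ne_zero.mpr (Ne.symm hne)) h2)
    have := hc.2 (hm s hs) (hm t ht) hne' ha hb hab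
    have e : a • (x + s • (y - x)) + b • (x + t • (y - x))
        = x + (a • s + b • t) • (y - x) := by
      have hb' : b = 1 - a := by linarith
      subst hb'
      ext k
      simp
      ring
    rw [e] at this
    exact this
  have hline : ∀ t : ℝ, HasDerivAt (fun t : ℝ => x + t • (y - x)) (y - x) t := by
    intro t
    simpa using ((hasDerivAt_id t).smul_const (y - x)).const_add x
  have h0 : HasDerivAt (fun t : ℝ => H (x + t • (y - x))) (fderiv ℝ H x (y - x)) 0 := by
    refine HasFDerivAt.comp_hasDerivAt (l := H) 0 ?_ (hline 0)
    simpa using hd x hx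
  have h1 : HasDerivAt (fun t : ℝ => H (x + t • (y - x))) (fderiv ℝ H y (y - x)) 1 := by
    refine HasFDerivAt.comp_hasDerivAt (l := H) 1 ?_ (hline 1)
    simpa using hd y hy
  have l0 := hconv.lt_slope_of_hasDerivAt (by simp) (by simp) zero_lt_one h0
  have l1 := hconv.slope_lt_of_hasDerivAt (by simp) (by simp) zero_lt_one h1
  rw [hfd] at l0
  exact lt_irrefl _ (l0.trans l1)

theorem isUnit_aux {n N : ℕ} (hN : 0 < N) (J R : Fin N → Matrix (Fin n) (Fin n) ℝ)
    (hJ : ∀ i, (J i)ᵀ = -(J i)) (hR : ∀ i, (R i).PosDef) :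
    IsUnit (∑ i, (J i - R i)) := by
  rw [← Matrix.mulVec_injective_iff_isUnit]
  rw [← Matrix.coe_mulVecLin, ← LinearMap.ker_eq_bot, LinearMap.ker_eq_bot']
  intro v hv
  by_contra hne
  rw [Matrix.mulVecLin_apply, Matrix.sum_mulVec] at hv
  have h0 : ∑ i, v ⬝ᵥ ((J i - R i) *ᵥ v) = 0 := by
    rw [← dotProduct_sum, hv, dotProduct_zero]
  have hneg : ∀ i, v ⬝ᵥ ((J i - R i) *ᵥ v) < 0 := by
    intro i
    have hj : v ⬝ᵥ (J i *ᵥ v) = 0 := by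
      have h1 : v ⬝ᵥ (J i *ᵥ v) = v ⬝ᵥ ((J i)ᵀ *ᵥ v) := by
        rw [Matrix.mulVec_transpose, dotProduct_comm v (v ᵥ* J i), Matrix.dotProduct_mulVec]
      rw [hJ i, Matrix.neg_mulVec, dotProduct_neg] at h1
      linarith
    have hr := (hR i).dotProduct_mulVec_pos hne
    simp only [star_trivial] at hr
    rw [Matrix.sub_mulVec, dotProduct_sub, hj]
    linarith
  have : ∑ i, v ⬝ᵥ ((J i - R i) *ᵥ v) < 0 :=
    Finset.sum_neg (fun i _ => hneg i) ⟨⟨0, hN⟩, Finset.mem_univ _⟩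
  linarith

theorem output_aux {n N M : ℕ} (hN : 0 < N)
    (B : Matrix (Fin N) (Fin M) ℝ)
    (hB1 : ∀ k, ∑ i, B i k = 0)
    (hBker : LinearMap.ker (Matrix.mulVecLin Bᵀ) =
      Submodule.span ℝ {(fun _ => (1 : ℝ) : Fin N → ℝ)})
    (A : Fin N → Matrix (Fin n) (Fin n) ℝ) (hA : IsUnit (∑ i, A i))
    (d : Fin N → Fin n → ℝ) (g : Fin N → Fin n → ℝ) (e : Fin M → Fin n → ℝ)
    (h1 : ∀ k, ∑ i, B i k • g i = 0)
    (h2 : ∀ i, (0 : Fin n → ℝ) = A i *ᵥ g i - (∑ k, B i k • e k) + d i) (i : Fin N) :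
    g i = -((∑ i, A i)⁻¹ *ᵥ (∑ i, d i)) := by
  have hc : ∀ j, g j = g i := by
    intro j
    ext l
    have hm : (fun a => g a l) ∈ LinearMap.ker (Matrix.mulVecLin Bᵀ) := by
      rw [LinearMap.mem_ker, Matrix.mulVecLin_apply]
      ext k
      have := congrFun (h1 k) l
      simpa [Matrix.mulVec, dotProduct] using this
    rw [hBker, Submodule.mem_span_singleton] at hm
    obtain ⟨c, hc⟩ := hm
    have a1 := congrFun hc j
    have a2 := congrFun hc i
    simp at a1 a2
    rw [← a1, ← a2]
  have hs : ∑ j, (A j *ᵥ g j - (∑ k, B j k • e k) + d j) = 0 :=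
    Finset.sum_eq_zero (fun j _ => (h2 j).symm)
  have hz : ∑ j, ∑ k, B j k • e k = 0 := by
    rw [Finset.sum_comm]
    refine Finset.sum_eq_zero (fun k _ => ?_)
    rw [← Finset.sum_smul, hB1, zero_smul]
  rw [Finset.sum_add_distrib, Finset.sum_sub_distrib, hz, sub_zero] at hs
  simp only [hc] at hs
  rw [← Matrix.sum_mulVec] at hs
  rw [← Matrix.mulVec_neg, ← eq_neg_of_add_eq_zero_left hs, Matrix.mulVec_mulVec,
    Matrix.nonsing_inv_mul _ ((Matrix.isUnit_iff_isUnit_det _).1 hA), Matrix.one_mulVec]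

/-- with `G_i = I_n`, the `x`-component of an equilibrium of the
network is unique, and the common output value is
`∇H_{n,i}(x̄_i) = y* = −(Σ(J_i − R_i))⁻¹ Σ d_i` for every `i`. -/
theorem equilibrium_x_unique
    {n N M : ℕ} (hn : 0 < n) (hN : 0 < N) (hM : 0 < M)
    (B : Matrix (Fin N) (Fin M) ℝ)
    (hB1 : ∀ k, ∑ i, B i k = 0)
    (hBker : LinearMap.ker (Matrix.mulVecLin Bᵀ) =
      Submodule.span ℝ {(fun _ => (1 : ℝ) : Fin N → ℝ)})
    (J R : Fin N → Matrix (Fin n) (Fin n) ℝ)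
    (hJ : ∀ i, (J i)ᵀ = -(J i)) (hR : ∀ i, (R i).PosDef)
    (d : Fin N → Fin n → ℝ)
    (Ωn : Set (Fin n → ℝ)) (hΩno : IsOpen Ωn) (hΩnc : Convex ℝ Ωn)
    (Ωe : Set (Fin n → ℝ)) (hΩeo : IsOpen Ωe) (hΩec : Convex ℝ Ωe)
    (Hn : Fin N → (Fin n → ℝ) → ℝ)
    (hHnC : ∀ i, ContDiffOn ℝ 1 (Hn i) Ωn)
    (hHnconv : ∀ i, StrictConvexOn ℝ Ωn (Hn i))
    (He : Fin M → (Fin n → ℝ) → ℝ)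
    (hHeC : ∀ k, ContDiffOn ℝ 1 (He k) Ωe)
    (hHeconv : ∀ k, StrictConvexOn ℝ Ωe (He k))
    -- the equilibrium (x̄, η̄):
    (xbar : Fin N → Fin n → ℝ) (ηbar : Fin M → Fin n → ℝ)
    (hxbar : ∀ i, xbar i ∈ Ωn) (hηbar : ∀ k, ηbar k ∈ Ωe)
    (heq1 : ∀ k, ∑ i, B i k • grad (Hn i) (xbar i) = 0)
    (heq2 : ∀ i, (0 : Fin n → ℝ) = (J i - R i) *ᵥ grad (Hn i) (xbar i)
      - (∑ k, B i k • grad (He k) (ηbar k)) + d i)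
    -- the equilibrium (x̃, η̃):
    (xtil : Fin N → Fin n → ℝ) (ηtil : Fin M → Fin n → ℝ)
    (hxtil : ∀ i, xtil i ∈ Ωn) (hηtil : ∀ k, ηtil k ∈ Ωe)
    (heq1' : ∀ k, ∑ i, B i k • grad (Hn i) (xtil i) = 0)
    (heq2' : ∀ i, (0 : Fin n → ℝ) = (J i - R i) *ᵥ grad (Hn i) (xtil i)
      - (∑ k, B i k • grad (He k) (ηtil k)) + d i) :
    xbar = xtil ∧
    IsUnit (∑ i, (J i - R i)) ∧
    ∀ i, grad (Hn i) (xbar i) = -((∑ i, (J i - R i))⁻¹ *ᵥ (∑ i, d i)) := by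
  have hU := isUnit_aux hN J R hJ hR
  have hb := output_aux hN B hB1 hBker (fun i => J i - R i) hU d
    (fun i => grad (Hn i) (xbar i)) _ heq1 heq2
  have ht := output_aux hN B hB1 hBker (fun i => J i - R i) hU d
    (fun i => grad (Hn i) (xtil i)) _ heq1' heq2'
  refine ⟨?_, hU, hb⟩
  funext i
  exact grad_inj_aux (Hn i) Ωn hΩno (hHnC i) (hHnconv i) (hxbar i) (hxtil i)
    ((hb i).trans (ht i).symm)
end

section
/- Theorem 2 (output agreement on a prescribed set point via decentralized integral control). Fix y* ∈ ℝ^m and consider, for each controlled node i ∈ I_{11} ∪ I_{21}, the decentralized dynamic controller ξ̇_i = y* − G_iᵀ∇H_{n,i}(x_i), u_i = ξ_i. Assume the feasibility condition: there exist constant vectors x̄ ∈ (Ω_n)^N, η̄ ∈ (Ω_e)^M and d_i ∈ ℝ^m (i ∈ I_{11} ∪ I_{21}) such that (a) G_iᵀ∇H_{n,i}(x̄_i) = y* for every node i; (b) 0 = (J_i − R_i)∇H_{n,i}(x̄_i) − G_i(B_i ⊗ I_m)∇H_e(η̄) + G_i d_i for every i ∈ I_{11} ∪ I_{21}; (c)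 0 = (J_i − R_i)∇H_{n,i}(x̄_i) − G_i(B_i ⊗ I_m)∇H_e(η̄) + G_i δ_i for every i ∈ I_{12} ∪ I_{22}. Set ξ̄_i = d_i − δ_i for i ∈ I_{11} ∪ I_{21}. Then there exists an open set U of initial conditions containing (x̄, η̄, ξ̄) such that every solution (x, η, ξ) of the closed-loop system with initial condition in U is defined for all t ≥ 0 and converges as t → ∞ to an equilibrium (x̃, η̃, ξ̃) of the closed-loop system at which G_iᵀ∇H_{n,i}(x̃_i) = y* for every node i. -/
open Matrix Filter Topology Set

lemma grad_dot {p : ℕ} (H : (Fin p → ℝ) → ℝ) (x v : Fin p → ℝ) :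
    grad H x ⬝ᵥ v = fderiv ℝ H x v := by
  conv_rhs => rw [← Finset.univ_sum_single v, map_sum]
  refine Finset.sum_congr rfl fun j _ => ?_
  have : (Pi.single j (v j) : Fin p → ℝ) = v j • Pi.single j (1 : ℝ) := by
    rw [← Pi.single_smul]; simp
  rw [this, map_smul, grad, smul_eq_mul, mul_comm]

lemma grad_continuousOn {p : ℕ} {H : (Fin p → ℝ) → ℝ} {Ω : Set (Fin p → ℝ)} (ho : IsOpen Ω)
    (hC : ContDiffOn ℝ 1 H Ω) : ContinuousOn (grad H) Ω := by
  have h := hC.continuousOn_fderiv_of_isOpen ho le_rfl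
  refine continuousOn_pi.2 fun j => ?_
  exact h.clm_apply continuousOn_const

/-- Bregman distance -/
noncomputable def breg {p : ℕ} (H : (Fin p → ℝ) → ℝ) (a x : Fin p → ℝ) : ℝ :=
  H x - H a - grad H a ⬝ᵥ (x - a)

lemma breg_self {p : ℕ} (H : (Fin p → ℝ) → ℝ) (a : Fin p → ℝ) : breg H a a = 0 := by
  simp [breg]

lemma breg_continuousOn {p : ℕ} {H : (Fin p → ℝ) → ℝ} {Ω : Set (Fin p → ℝ)}
    (hC : ContDiffOn ℝ 1 H Ω) (a : Fin p → ℝ) : ContinuousOn (breg H a) Ω := by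
  unfold breg
  have := hC.continuousOn
  have h2 : Continuous fun x : Fin p → ℝ => grad H a ⬝ᵥ (x - a) := by
    unfold dotProduct; fun_prop
  exact (this.sub continuousOn_const).sub h2.continuousOn

lemma breg_pos {p : ℕ} {H : (Fin p → ℝ) → ℝ} {Ω : Set (Fin p → ℝ)} (ho : IsOpen Ω)
    (hC : ContDiffOn ℝ 1 H Ω) (hconv : StrictConvexOn ℝ Ω H) {a x : Fin p → ℝ}
    (ha : a ∈ Ω) (hx : x ∈ Ω) (hne : x ≠ a) : 0 < breg H a x := by
  have hd : HasFDerivAt H (fderiv ℝ H a) a :=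
    ((hC.differentiableOn one_ne_zero).differentiableAt (ho.mem_nhds ha)).hasFDerivAt
  let l : ℝ →ᵃ[ℝ] (Fin p → ℝ) := AffineMap.lineMap a x
  have hl0 : l 0 = a := by simp [l]
  have hl1 : l 1 = x := by simp [l]
  have hsc : StrictConvexOn ℝ (l ⁻¹' Ω) (H ∘ l) := by
    refine ⟨hconv.1.affine_preimage l, ?_⟩
    intro s hs t ht hst α β hα hβ hab
    have hinj : l s ≠ l t := fun h => hst (AffineMap.lineMap_injective ℝ (Ne.symm hne) h)
    have := hconv.2 hs ht hinj hα hβ hab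
    simp only [Function.comp]
    rwa [Convex.combo_affine_apply hab]
  have hder : HasDerivAt (H ∘ l) (fderiv ℝ H a (x - a)) 0 := by
    have h1 : HasDerivAt l (x - a) 0 := AffineMap.hasDerivAt_lineMap
    have h2 : HasFDerivAt H (fderiv ℝ H a) (l 0) := by rw [hl0]; exact hd
    exact h2.comp_hasDerivAt (0 : ℝ) h1
  have := hsc.lt_slope_of_hasDerivAt (x := 0) (y := 1) (by simp [hl0, ha]) (by simp [hl1, hx])
    one_pos hder
  simp [slope_def_field, hl0, hl1] at this
  rw [breg, grad_dot]
  rw [map_sub]; linarith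

lemma breg_nonneg {p : ℕ} {H : (Fin p → ℝ) → ℝ} {Ω : Set (Fin p → ℝ)} (ho : IsOpen Ω)
    (hC : ContDiffOn ℝ 1 H Ω) (hconv : StrictConvexOn ℝ Ω H) {a x : Fin p → ℝ}
    (ha : a ∈ Ω) (hx : x ∈ Ω) : 0 ≤ breg H a x := by
  by_cases h : x = a
  · rw [h, breg_self]
  · exact (breg_pos ho hC hconv ha hx h).le

lemma grad_inj {p : ℕ} {H : (Fin p → ℝ) → ℝ} {Ω : Set (Fin p → ℝ)} (ho : IsOpen Ω)
    (hC : ContDiffOn ℝ 1 H Ω) (hconv : StrictConvexOn ℝ Ω H) {a x : Fin p → ℝ}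
    (ha : a ∈ Ω) (hx : x ∈ Ω) (h : grad H x = grad H a) : x = a := by
  by_contra hne
  have h1 := breg_pos ho hC hconv ha hx hne
  have h2 := breg_pos ho hC hconv hx ha (Ne.symm hne)
  simp only [breg, h, dotProduct_sub] at h1 h2
  linarith

lemma breg_deriv {p : ℕ} {H : (Fin p → ℝ) → ℝ} {Ω : Set (Fin p → ℝ)} (ho : IsOpen Ω)
    (hC : ContDiffOn ℝ 1 H Ω) (a : Fin p → ℝ) {x : ℝ → Fin p → ℝ} {v : Fin p → ℝ} {t : ℝ}
    {s : Set ℝ} (hxt : x t ∈ Ω) (hx : HasDerivWithinAt x v s t) :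
    HasDerivWithinAt (fun τ => breg H a (x τ)) ((grad H (x t) - grad H a) ⬝ᵥ v) s t := by
  have hd : HasFDerivAt H (fderiv ℝ H (x t)) (x t) :=
    ((hC.differentiableOn one_ne_zero).differentiableAt (ho.mem_nhds hxt)).hasFDerivAt
  have h1 := hd.comp_hasDerivWithinAt t hx
  have h2 := (fderiv ℝ H a).hasFDerivAt.comp_hasDerivWithinAt t (hx.sub_const a)
  have h3 := (h1.sub_const (H a)).sub h2
  rw [sub_dotProduct, grad_dot, grad_dot]
  refine h3.congr_of_eventuallyEq (Eventually.of_forall fun τ => ?_) ?_ <;>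
    simp [breg, grad_dot]

/-- The Barbalat lemma. -/
lemma barbalat {E : Type*} [NormedAddCommGroup E] [NormedSpace ℝ E] {F f : ℝ → E} {L : E}
    (hF : ∀ t ∈ Ici (0:ℝ), HasDerivWithinAt F (f t) (Ici 0) t)
    (hL : Tendsto F atTop (𝓝 L)) (hu : UniformContinuousOn f (Ici 0)) :
    Tendsto f atTop (𝓝 0) := by
  rw [Metric.tendsto_atTop]
  intro ε hε
  obtain ⟨δ, hδ, hδ'⟩ := Metric.uniformContinuousOn_iff.1 hu (ε/4) (by linarith)
  obtain ⟨T, hT⟩ := Metric.tendsto_atTop.1 hL (ε * δ / 16) (by positivity)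
  refine ⟨max T 0, fun t ht => ?_⟩
  have htT : T ≤ t := le_trans (le_max_left _ _) ht
  have ht0 : 0 ≤ t := le_trans (le_max_right _ _) ht
  have hsub : Icc t (t + δ/2) ⊆ Ici 0 := fun s hs => le_trans ht0 hs.1
  have hg : ∀ s ∈ Icc t (t + δ/2), HasDerivWithinAt (fun s => F s - s • f t) (f s - f t)
      (Icc t (t + δ/2)) s := by
    intro s hs
    have h1 := (hF s (hsub hs)).mono hsub
    have h2 := (hasDerivWithinAt_id s (Icc t (t + δ/2))).smul_const (f t)
    have h3 := h1.sub h2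
    rw [one_smul] at h3
    exact h3
  have hb : ∀ s ∈ Icc t (t + δ/2), ‖f s - f t‖ ≤ ε/4 := by
    intro s hs
    rw [← dist_eq_norm]
    refine (hδ' s (hsub hs) t ht0 ?_).le
    rw [Real.dist_eq, abs_of_nonneg (by linarith [hs.1])]
    linarith [hs.2]
  have := (convex_Icc t (t + δ/2)).norm_image_sub_le_of_norm_hasDerivWithin_le hg hb
    (left_mem_Icc.2 (by linarith)) (right_mem_Icc.2 (by linarith))
  have e1 : F (t + δ/2) - (t + δ/2) • f t - (F t - t • f t) =
      (F (t + δ/2) - F t) - (δ/2) • f t := by module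
  rw [e1] at this
  have h3 : ‖(δ/2) • f t‖ ≤ ‖F (t + δ/2) - F t‖ + ε/4 * (δ/2) := by
    have h4 : ‖t + δ/2 - t‖ = δ/2 := by simp [abs_of_pos hδ]
    rw [h4] at this
    have h5 : (δ/2) • f t = (F (t + δ/2) - F t) - ((F (t + δ/2) - F t) - (δ/2) • f t) := by abel
    rw [h5]
    exact (norm_sub_le _ _).trans (by linarith)
  have h6 : ‖F (t + δ/2) - F t‖ < ε * δ/8 := by
    rw [← dist_eq_norm]
    have := dist_triangle_right (F (t + δ/2)) (F t) L
    have a1 := hT t htT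
    have a2 := hT (t + δ/2) (by linarith)
    linarith
  rw [norm_smul, Real.norm_of_nonneg (by linarith)] at h3
  rw [dist_zero_right]
  by_contra hcon
  push Not at hcon
  nlinarith

lemma sep {X : Type*} [MetricSpace X] {K : Set X} (hK : IsCompact K) {f : X → ℝ} {p : X}
    (hf : ContinuousOn f K) (h : ∀ q ∈ K, q ≠ p → 0 < f q) {ε : ℝ} (hε : 0 < ε) :
    ∃ c > 0, ∀ q ∈ K, f q < c → dist q p < ε := by
  have hK' : IsCompact (K ∩ {q | ε ≤ dist q p}) :=
    hK.inter_right (isClosed_le continuous_const (by fun_prop))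
  obtain ⟨c, hc, hc'⟩ := hK'.exists_forall_le' (hf.mono inter_subset_left) (a := 0) (by
    rintro q ⟨hq, hq'⟩
    refine h q hq ?_
    rintro rfl
    simp at hq'; linarith)
  refine ⟨c, hc, fun q hq hlt => ?_⟩
  by_contra hcon
  exact absurd (hc' q ⟨hq, not_lt.1 hcon⟩) (not_le.2 hlt)

lemma sep_tendsto {X : Type*} [MetricSpace X] {K : Set X} (hK : IsCompact K) {f : X → ℝ} {p : X}
    (hf : ContinuousOn f K) (h : ∀ q ∈ K, q ≠ p → 0 < f q) {s : ℝ → X}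
    (hs : ∀ t ∈ Ici (0:ℝ), s t ∈ K) (hlim : Tendsto (fun t => f (s t)) atTop (𝓝 0)) :
    Tendsto s atTop (𝓝 p) := by
  rw [Metric.tendsto_nhds]
  intro ε hε
  obtain ⟨c, hc, hc'⟩ := sep hK hf h hε
  filter_upwards [hlim.eventually (gt_mem_nhds hc), eventually_ge_atTop 0] with t h1 h2
  exact hc' _ (hs t h2) h1

lemma unif_of_inj {X Y : Type*} [MetricSpace X] [MetricSpace Y] {K : Set X} (hK : IsCompact K)
    {f : X → Y} (hf : ContinuousOn f K) (hinj : InjOn f K) {s : ℝ → X} {A : Set ℝ}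
    (hs : ∀ t ∈ A, s t ∈ K) (hu : UniformContinuousOn (fun t => f (s t)) A) :
    UniformContinuousOn s A := by
  rw [Metric.uniformContinuousOn_iff] at hu ⊢
  intro ε hε
  have hK' : IsCompact ((K ×ˢ K) ∩ {q | ε ≤ dist q.1 q.2}) :=
    (hK.prod hK).inter_right (isClosed_le continuous_const (by fun_prop))
  have hcont : ContinuousOn (fun q : X × X => dist (f q.1) (f q.2)) (K ×ˢ K) :=
    continuous_dist.comp_continuousOn (ContinuousOn.prodMk (hf.comp continuousOn_fst (fun _ hq => (mem_prod.1 hq).1))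
      (hf.comp continuousOn_snd (fun _ hq => (mem_prod.1 hq).2)))
  obtain ⟨c, hc, hc'⟩ := hK'.exists_forall_le' (hcont.mono inter_subset_left) (a := 0) (by
    rintro ⟨q, r⟩ ⟨⟨hq, hr⟩, hqr⟩
    refine dist_pos.2 fun h => ?_
    have h1 : q = r := hinj hq hr h
    have h2 : ε ≤ dist q r := hqr
    rw [h1, dist_self] at h2
    linarith)
  obtain ⟨δ, hδ, hδ'⟩ := hu c hc
  refine ⟨δ, hδ, fun a ha b hb hab => ?_⟩
  by_contra hcon
  exact absurd (hc' (s a, s b) ⟨⟨hs a ha, hs b hb⟩, not_lt.1 hcon⟩) (not_le.2 (hδ' a ha b hb hab))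

/-- The state space of the closed-loop system. -/
abbrev St (n m N M : ℕ) (C : Finset (Fin N)) : Type :=
  (Fin N → Fin n → ℝ) × (Fin M → Fin m → ℝ) × ({i // i ∈ C} → Fin m → ℝ)

/-- The data of the controlled network. `C` is the set of controlled nodes and `I1` the set
of dynamic nodes. -/
structure Net (n m N M : ℕ) (C I1 : Finset (Fin N)) where
  B : Matrix (Fin N) (Fin M) ℝ
  hB1 : ∀ k, ∑ i, B i k = 0
  J : Fin N → Matrix (Fin n) (Fin n) ℝ
  R : Fin N → Matrix (Fin n) (Fin n) ℝ
  hJ : ∀ i, (J i)ᵀ = -(J i)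
  hR : ∀ i, (R i).PosDef
  G : Fin N → Matrix (Fin n) (Fin m) ℝ
  δ : Fin N → Fin m → ℝ
  Ωn : Set (Fin n → ℝ)
  hΩno : IsOpen Ωn
  Ωe : Set (Fin m → ℝ)
  hΩeo : IsOpen Ωe
  Hn : Fin N → (Fin n → ℝ) → ℝ
  hHnC : ∀ i, ContDiffOn ℝ 1 (Hn i) Ωn
  hHnconv : ∀ i, StrictConvexOn ℝ Ωn (Hn i)
  He : Fin M → (Fin m → ℝ) → ℝ
  hHeC : ∀ k, ContDiffOn ℝ 1 (He k) Ωe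
  hHeconv : ∀ k, StrictConvexOn ℝ Ωe (He k)
  ystar : Fin m → ℝ

namespace Net

variable {n m N M : ℕ} {C I1 : Finset (Fin N)} (S : Net n m N M C I1)

/-- Extension of the controller state by zero. -/
def ext (ξ : {i // i ∈ C} → Fin m → ℝ) (i : Fin N) : Fin m → ℝ :=
  if h : i ∈ C then ξ ⟨i, h⟩ else 0

/-- Node vector field. -/
noncomputable def F (i : Fin N) (s : St n m N M C) : Fin n → ℝ :=
  (S.J i - S.R i) *ᵥ grad (S.Hn i) (s.1 i)
    - (S.G i) *ᵥ (∑ k, S.B i k • grad (S.He k) (s.2.1 k)) + (S.G i) *ᵥ (ext s.2.2 i + S.δ i)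

/-- Edge vector field. -/
noncomputable def E (k : Fin M) (s : St n m N M C) : Fin m → ℝ :=
  ∑ i, S.B i k • ((S.G i)ᵀ *ᵥ grad (S.Hn i) (s.1 i))

/-- Controller vector field. -/
noncomputable def X (c : {i // i ∈ C}) (s : St n m N M C) : Fin m → ℝ :=
  S.ystar - (S.G c.1)ᵀ *ᵥ grad (S.Hn c.1) (s.1 c.1)

/-- The domain. -/
def Dom : Set (St n m N M C) := {s | (∀ i, s.1 i ∈ S.Ωn) ∧ ∀ k, s.2.1 k ∈ S.Ωe}

/-- Equilibria with prescribed output. -/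
structure Eq (p : St n m N M C) : Prop where
  dom : p ∈ S.Dom
  F : ∀ i, S.F i p = 0
  out : ∀ i, (S.G i)ᵀ *ᵥ grad (S.Hn i) (p.1 i) = S.ystar

/-- Solutions. -/
structure Sol (s : ℝ → St n m N M C) : Prop where
  cont : ContinuousOn s (Ici 0)
  x : ∀ t ∈ Ici (0:ℝ), ∀ i ∈ I1, HasDerivWithinAt (fun τ => (s τ).1 i) (S.F i (s t)) (Ici 0) t
  alg : ∀ t ∈ Ici (0:ℝ), ∀ i ∉ I1, S.F i (s t) = 0
  η : ∀ t ∈ Ici (0:ℝ), ∀ k, HasDerivWithinAt (fun τ => (s τ).2.1 k) (S.E k (s t)) (Ici 0) t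
  ξ : ∀ t ∈ Ici (0:ℝ), ∀ c, HasDerivWithinAt (fun τ => (s τ).2.2 c) (S.X c (s t)) (Ici 0) t

/-- Lyapunov function. -/
noncomputable def V (p s : St n m N M C) : ℝ :=
  ∑ i ∈ I1, breg (S.Hn i) (p.1 i) (s.1 i) + ∑ k, breg (S.He k) (p.2.1 k) (s.2.1 k)
    + ∑ c, (1/2 : ℝ) * ((s.2.2 c - p.2.2 c) ⬝ᵥ (s.2.2 c - p.2.2 c))

/-- Dissipation. -/
noncomputable def Q (a x : Fin N → Fin n → ℝ) : ℝ :=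
  ∑ i, (grad (S.Hn i) (x i) - grad (S.Hn i) (a i)) ⬝ᵥ
    (S.R i *ᵥ (grad (S.Hn i) (x i) - grad (S.Hn i) (a i)))

/-- Augmented Lyapunov function. -/
noncomputable def W (p s : St n m N M C) : ℝ := S.V p s + ∑ i ∈ I1ᶜ, ‖S.F i s‖

lemma isOpen_dom : IsOpen S.Dom := by
  have h1 : IsOpen {s : St n m N M C | ∀ i, s.1 i ∈ S.Ωn} := by
    simp only [Set.ofPred_forall]
    exact isOpen_iInter_of_finite fun i => S.hΩno.preimage (by fun_prop)
  have h2 : IsOpen {s : St n m N M C | ∀ k, s.2.1 k ∈ S.Ωe} := by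
    simp only [Set.ofPred_forall]
    exact isOpen_iInter_of_finite fun i => S.hΩeo.preimage (by fun_prop)
  exact h1.inter h2

lemma cont_gn (i : Fin N) :
    ContinuousOn (fun s : St n m N M C => grad (S.Hn i) (s.1 i)) S.Dom :=
  (grad_continuousOn S.hΩno (S.hHnC i)).comp (by fun_prop) (fun _ hs => hs.1 i)

lemma cont_ge (k : Fin M) :
    ContinuousOn (fun s : St n m N M C => grad (S.He k) (s.2.1 k)) S.Dom :=
  (grad_continuousOn S.hΩeo (S.hHeC k)).comp (by fun_prop) (fun _ hs => hs.2 k)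

lemma cont_mv {α : Type*} [TopologicalSpace α] {D : Set α} {a b : ℕ}
    (A : Matrix (Fin a) (Fin b) ℝ) {f : α → Fin b → ℝ} (hf : ContinuousOn f D) :
    ContinuousOn (fun s => A *ᵥ f s) D :=
  (Continuous.matrix_mulVec (A := fun _ : Fin b → ℝ => A) continuous_const
    continuous_id).comp_continuousOn hf

lemma cont_ext (i : Fin N) : Continuous (fun s : St n m N M C => ext s.2.2 i) := by
  unfold ext
  split_ifs <;> fun_prop

lemma cont_F (i : Fin N) : ContinuousOn (S.F i) S.Dom := by
  unfold F
  refine ((cont_mv _ (S.cont_gn i)).sub (cont_mv _ ?_)).add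
    (cont_mv _ ((cont_ext i).continuousOn.add continuousOn_const))
  exact continuousOn_finsetSum _ fun k _ => (S.cont_ge k).fun_const_smul (S.B i k)

lemma cont_E (k : Fin M) : ContinuousOn (S.E k) S.Dom :=
  continuousOn_finsetSum _ fun i _ => (cont_mv (S.G i)ᵀ (S.cont_gn i)).fun_const_smul (S.B i k)

lemma cont_X (c : {i // i ∈ C}) : ContinuousOn (S.X c) S.Dom :=
  continuousOn_const.sub (cont_mv _ (S.cont_gn c.1))

lemma cont_dot {α : Type*} [TopologicalSpace α] {D : Set α} {a : ℕ}
    {f g : α → Fin a → ℝ} (hf : ContinuousOn f D) (hg : ContinuousOn g D) :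
    ContinuousOn (fun s => f s ⬝ᵥ g s) D :=
  continuousOn_finsetSum _ fun j _ =>
    ((continuous_apply j).comp_continuousOn hf).mul ((continuous_apply j).comp_continuousOn hg)

lemma cont_Q (a : Fin N → Fin n → ℝ) :
    ContinuousOn (fun s : St n m N M C => S.Q a s.1) S.Dom :=
  continuousOn_finsetSum _ fun i _ => cont_dot ((S.cont_gn i).sub continuousOn_const)
    (cont_mv _ ((S.cont_gn i).sub continuousOn_const))

lemma cont_Qx (a : Fin N → Fin n → ℝ) :
    ContinuousOn (S.Q a) {x | ∀ i, x i ∈ S.Ωn} := by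
  have h : ∀ i, ContinuousOn (fun x : Fin N → Fin n → ℝ => grad (S.Hn i) (x i))
      {x | ∀ i, x i ∈ S.Ωn} := fun i =>
    (grad_continuousOn S.hΩno (S.hHnC i)).comp (by fun_prop) (fun _ hs => hs i)
  exact continuousOn_finsetSum _ fun i _ => cont_dot ((h i).sub continuousOn_const)
    (cont_mv _ ((h i).sub continuousOn_const))

lemma cont_V (p : St n m N M C) : ContinuousOn (S.V p) S.Dom := by
  refine ((continuousOn_finsetSum _ fun i _ => ?_).add
    (continuousOn_finsetSum _ fun k _ => ?_)).add (continuousOn_finsetSum _ fun c _ => ?_)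
  · exact (breg_continuousOn (S.hHnC i) _).comp (by fun_prop) (fun _ hs => hs.1 i)
  · exact (breg_continuousOn (S.hHeC k) _).comp (by fun_prop) (fun _ hs => hs.2 k)
  · exact continuousOn_const.mul (cont_dot (by fun_prop) (by fun_prop))

lemma cont_W (p : St n m N M C) : ContinuousOn (S.W p) S.Dom :=
  (S.cont_V p).add (continuousOn_finsetSum _ fun i _ => (S.cont_F i).norm)

lemma R_pos (i : Fin N) {z : Fin n → ℝ} (hz : z ≠ 0) : 0 < z ⬝ᵥ (S.R i *ᵥ z) := by
  simpa using (S.hR i).dotProduct_mulVec_pos hz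

lemma R_nonneg (i : Fin N) (z : Fin n → ℝ) : 0 ≤ z ⬝ᵥ (S.R i *ᵥ z) := by
  by_cases hz : z = 0
  · simp [hz]
  · exact (S.R_pos i hz).le

lemma JR (i : Fin N) (z : Fin n → ℝ) :
    z ⬝ᵥ ((S.J i - S.R i) *ᵥ z) = - (z ⬝ᵥ (S.R i *ᵥ z)) := by
  have h : z ⬝ᵥ (S.J i *ᵥ z) = 0 := by
    have h1 : z ⬝ᵥ (S.J i *ᵥ z) = z ⬝ᵥ ((S.J i)ᵀ *ᵥ z) := by
      rw [dotProduct_mulVec, ← mulVec_transpose, dotProduct_comm]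
    rw [S.hJ i, neg_mulVec, dotProduct_neg] at h1
    linarith
  rw [sub_mulVec, dotProduct_sub, h, zero_sub]

lemma JR_inj (i : Fin N) {z : Fin n → ℝ} (h : (S.J i - S.R i) *ᵥ z = 0) : z = 0 := by
  by_contra hz
  have h1 := S.R_pos i hz
  have h2 := S.JR i z
  rw [h, dotProduct_zero] at h2
  linarith

lemma Q_nonneg (a x : Fin N → Fin n → ℝ) : 0 ≤ S.Q a x :=
  Finset.sum_nonneg fun i _ => S.R_nonneg i _

lemma Q_pos {a x : Fin N → Fin n → ℝ} (ha : ∀ i, a i ∈ S.Ωn) (hx : ∀ i, x i ∈ S.Ωn)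
    (hne : x ≠ a) : 0 < S.Q a x := by
  obtain ⟨i, hi⟩ := Function.ne_iff.1 hne
  refine Finset.sum_pos' (fun i _ => S.R_nonneg i _) ⟨i, Finset.mem_univ _, S.R_pos i ?_⟩
  intro h
  exact hi (grad_inj S.hΩno (S.hHnC i) (S.hHnconv i) (ha i) (hx i) (sub_eq_zero.1 h))

lemma V_self (p : St n m N M C) : S.V p p = 0 := by
  simp [V, breg_self]

lemma dot_self_nonneg' {a : ℕ} (z : Fin a → ℝ) : 0 ≤ z ⬝ᵥ z :=
  Finset.sum_nonneg fun i _ => mul_self_nonneg _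

lemma V_nonneg {p s : St n m N M C} (hp : p ∈ S.Dom) (hs : s ∈ S.Dom) : 0 ≤ S.V p s := by
  refine add_nonneg (add_nonneg (Finset.sum_nonneg fun i _ => ?_)
    (Finset.sum_nonneg fun k _ => ?_)) (Finset.sum_nonneg fun c _ => ?_)
  · exact breg_nonneg S.hΩno (S.hHnC i) (S.hHnconv i) (hp.1 i) (hs.1 i)
  · exact breg_nonneg S.hΩeo (S.hHeC k) (S.hHeconv k) (hp.2 k) (hs.2 k)
  · exact mul_nonneg (by norm_num) (dot_self_nonneg' _)

lemma V_zero {p s : St n m N M C} (hp : p ∈ S.Dom) (hs : s ∈ S.Dom) (h : S.V p s ≤ 0) :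
    (∀ i ∈ I1, s.1 i = p.1 i) ∧ s.2 = p.2 := by
  have n1 : ∀ i ∈ I1, 0 ≤ breg (S.Hn i) (p.1 i) (s.1 i) := fun i _ =>
    breg_nonneg S.hΩno (S.hHnC i) (S.hHnconv i) (hp.1 i) (hs.1 i)
  have n2 : ∀ k ∈ Finset.univ, 0 ≤ breg (S.He k) (p.2.1 k) (s.2.1 k) := fun k _ =>
    breg_nonneg S.hΩeo (S.hHeC k) (S.hHeconv k) (hp.2 k) (hs.2 k)
  have n3 : ∀ c ∈ Finset.univ,
      0 ≤ (1/2 : ℝ) * ((s.2.2 c - p.2.2 c) ⬝ᵥ (s.2.2 c - p.2.2 c)) := fun c _ =>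
    mul_nonneg (by norm_num) (dot_self_nonneg' _)
  have m1 := Finset.sum_nonneg n1
  have m2 := Finset.sum_nonneg n2
  have m3 := Finset.sum_nonneg n3
  unfold V at h
  have z1 := (Finset.sum_eq_zero_iff_of_nonneg n1).1 (by linarith)
  have z2 := (Finset.sum_eq_zero_iff_of_nonneg n2).1 (by linarith)
  have z3 := (Finset.sum_eq_zero_iff_of_nonneg n3).1 (by linarith)
  refine ⟨fun i hi => ?_, Prod.ext (funext fun k => ?_) (funext fun c => ?_)⟩
  · by_contra hne
    exact (breg_pos S.hΩno (S.hHnC i) (S.hHnconv i) (hp.1 i) (hs.1 i) hne).ne' (z1 i hi)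
  · by_contra hne
    exact (breg_pos S.hΩeo (S.hHeC k) (S.hHeconv k) (hp.2 k) (hs.2 k) hne).ne'
      (z2 k (Finset.mem_univ _))
  · have := z3 c (Finset.mem_univ _)
    have h4 : (s.2.2 c - p.2.2 c) ⬝ᵥ (s.2.2 c - p.2.2 c) = 0 := by linarith
    exact sub_eq_zero.1 (dotProduct_self_eq_zero.1 h4)

/-- Algebraic constraints determine the static node states. -/
lemma alg_inj {p s : St n m N M C} (hp : p ∈ S.Dom) (hs : s ∈ S.Dom) (h2 : s.2 = p.2)
    (i : Fin N) (hF : S.F i s = S.F i p) : s.1 i = p.1 i := by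
  unfold F at hF
  rw [h2] at hF
  have h3 : (S.J i - S.R i) *ᵥ (grad (S.Hn i) (s.1 i) - grad (S.Hn i) (p.1 i)) = 0 := by
    rw [mulVec_sub, sub_eq_zero]
    simpa using hF
  exact grad_inj S.hΩno (S.hHnC i) (S.hHnconv i) (hp.1 i) (hs.1 i) (sub_eq_zero.1 (S.JR_inj i h3))

lemma W_pos {p s : St n m N M C} (hp : S.Eq p) (hs : s ∈ S.Dom) (hne : s ≠ p) :
    0 < S.W p s := by
  by_contra hcon
  push Not at hcon
  have hV := S.V_nonneg hp.dom hs
  have n4 : ∀ i ∈ I1ᶜ, 0 ≤ ‖S.F i s‖ := fun i _ => norm_nonneg _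
  have m4 := Finset.sum_nonneg n4
  unfold W at hcon
  obtain ⟨h1, h2⟩ := S.V_zero hp.dom hs (by linarith)
  have z4 := (Finset.sum_eq_zero_iff_of_nonneg n4).1 (by linarith)
  refine hne (Prod.ext (funext fun i => ?_) h2)
  by_cases hi : i ∈ I1
  · exact h1 i hi
  · refine S.alg_inj hp.dom hs h2 i ?_
    rw [hp.F i, norm_eq_zero.1 (z4 i (Finset.mem_compl.2 hi))]

lemma sum_ext (f : Fin N → Fin m → ℝ) (ξ : {i // i ∈ C} → Fin m → ℝ) :
    ∑ i, f i ⬝ᵥ ext ξ i = ∑ c : {i // i ∈ C}, f c.1 ⬝ᵥ ξ c := by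
  have h1 : ∑ i, f i ⬝ᵥ ext ξ i = ∑ i ∈ C, f i ⬝ᵥ ext ξ i := by
    refine (Finset.sum_subset (Finset.subset_univ _) fun i _ hi => ?_).symm
    simp [ext, hi]
  rw [h1, ← Finset.sum_coe_sort]
  refine Finset.sum_congr rfl fun c _ => ?_
  simp [ext]

/-- The dissipation identity. -/
lemma dissip {p s : St n m N M C} (hp : S.Eq p) (halg : ∀ i ∉ I1, S.F i s = 0) :
    ∑ i ∈ I1, (grad (S.Hn i) (s.1 i) - grad (S.Hn i) (p.1 i)) ⬝ᵥ S.F i s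
      + ∑ k, (grad (S.He k) (s.2.1 k) - grad (S.He k) (p.2.1 k)) ⬝ᵥ S.E k s
      + ∑ c, (s.2.2 c - p.2.2 c) ⬝ᵥ S.X c s = - S.Q p.1 s.1 := by
  set z : Fin N → Fin n → ℝ := fun i => grad (S.Hn i) (s.1 i) - grad (S.Hn i) (p.1 i) with hz
  set e : Fin M → Fin m → ℝ := fun k => grad (S.He k) (s.2.1 k) - grad (S.He k) (p.2.1 k) with he
  set y : Fin N → Fin m → ℝ := fun i => (S.G i)ᵀ *ᵥ z i with hy
  have hy' : ∀ i, (S.G i)ᵀ *ᵥ grad (S.Hn i) (s.1 i) = y i + S.ystar := by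
    intro i
    rw [hy, ← hp.out i]; simp [hz, mulVec_sub]
  have hE : ∀ k, S.E k s = ∑ i, S.B i k • y i := by
    intro k
    unfold E
    simp only [hy', smul_add, Finset.sum_add_distrib]
    rw [← Finset.sum_smul, S.hB1 k]; simp
  have hX : ∀ c, S.X c s = - y c.1 := by
    intro c; unfold X; rw [hy']; abel
  have hF : ∀ i, S.F i s = (S.J i - S.R i) *ᵥ z i - S.G i *ᵥ (∑ k, S.B i k • e k)
      + S.G i *ᵥ ext (s.2.2 - p.2.2) i := by
    intro i
    have h0 : S.F i s = S.F i s - S.F i p := by rw [hp.F i, sub_zero]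
    have h1 : ext (s.2.2 - p.2.2) i = ext s.2.2 i - ext p.2.2 i := by
      unfold ext; split_ifs <;> simp
    rw [h0, h1]
    simp only [F, hz, he, mulVec_sub, mulVec_add, smul_sub, Finset.sum_sub_distrib]
    abel
  have h1 : ∑ i ∈ I1, z i ⬝ᵥ S.F i s = ∑ i, z i ⬝ᵥ S.F i s := by
    refine Finset.sum_subset (Finset.subset_univ _) fun i _ hi => ?_
    rw [halg i hi, dotProduct_zero]
  have hG : ∀ i v, z i ⬝ᵥ (S.G i *ᵥ v) = y i ⬝ᵥ v := by
    intro i v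
    rw [dotProduct_mulVec, ← mulVec_transpose]
  have h2 : ∑ i, z i ⬝ᵥ S.F i s = - S.Q p.1 s.1 - ∑ i, ∑ k, S.B i k * (y i ⬝ᵥ e k)
      + ∑ c : {i // i ∈ C}, y c.1 ⬝ᵥ (s.2.2 - p.2.2) c := by
    rw [← sum_ext, Q, ← Finset.sum_neg_distrib, ← Finset.sum_sub_distrib, ← Finset.sum_add_distrib]
    refine Finset.sum_congr rfl fun i _ => ?_
    rw [hF, dotProduct_add, dotProduct_sub, S.JR, hG, hG, dotProduct_sum]
    simp [dotProduct_smul, hz]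
  have h3 : ∑ k, e k ⬝ᵥ S.E k s = ∑ i, ∑ k, S.B i k * (y i ⬝ᵥ e k) := by
    rw [Finset.sum_comm]
    refine Finset.sum_congr rfl fun k _ => ?_
    rw [hE, dotProduct_sum]
    refine Finset.sum_congr rfl fun i _ => ?_
    rw [dotProduct_smul, smul_eq_mul, dotProduct_comm]
  have h4 : ∑ c, (s.2.2 c - p.2.2 c) ⬝ᵥ S.X c s
      = - ∑ c : {i // i ∈ C}, y c.1 ⬝ᵥ (s.2.2 - p.2.2) c := by
    rw [← Finset.sum_neg_distrib]
    refine Finset.sum_congr rfl fun c _ => ?_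
    rw [hX, dotProduct_neg, dotProduct_comm]; rfl
  rw [h1, h2, h3, h4]; ring

lemma V_deriv {p : St n m N M C} (hp : S.Eq p) {s : ℝ → St n m N M C} (hs : S.Sol s) {t : ℝ}
    (ht : t ∈ Ici (0:ℝ)) (hd : s t ∈ S.Dom) :
    HasDerivWithinAt (fun τ => S.V p (s τ)) (- S.Q p.1 (s t).1) (Ici 0) t := by
  rw [← S.dissip hp (hs.alg t ht)]
  refine ((HasDerivWithinAt.fun_sum fun i hi => ?_).add
    (HasDerivWithinAt.fun_sum fun k _ => ?_)).add (HasDerivWithinAt.fun_sum fun c _ => ?_)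
  · exact breg_deriv S.hΩno (S.hHnC i) _ (hd.1 i) (hs.x t ht i hi)
  · exact breg_deriv S.hΩeo (S.hHeC k) _ (hd.2 k) (hs.η t ht k)
  · have h1 := hasDerivWithinAt_pi.1 ((hs.ξ t ht c).sub_const (p.2.2 c))
    have h2 : HasDerivWithinAt (fun τ => ((s τ).2.2 c - p.2.2 c) ⬝ᵥ ((s τ).2.2 c - p.2.2 c))
        (∑ j, (S.X c (s t) j * ((s t).2.2 c - p.2.2 c) j
          + ((s t).2.2 c - p.2.2 c) j * S.X c (s t) j)) (Ici 0) t :=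
      HasDerivWithinAt.fun_sum fun j _ => (h1 j).mul (h1 j)
    refine (h2.const_mul (1/2 : ℝ)).congr_deriv ?_
    rw [dotProduct, Finset.mul_sum]
    refine Finset.sum_congr rfl fun j _ => ?_
    ring

/-- `V` is antitone as long as the solution stays in the domain. -/
lemma V_anti {p : St n m N M C} (hp : S.Eq p) {s : ℝ → St n m N M C} (hs : S.Sol s)
    {A : Set ℝ} (hA : Convex ℝ A) (hA0 : A ⊆ Ici 0) (hd : ∀ t ∈ A, s t ∈ S.Dom) :
    AntitoneOn (fun τ => S.V p (s τ)) A := by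
  have hder := fun t ht => (S.V_deriv hp hs (hA0 ht) (hd t ht)).mono hA0
  refine antitoneOn_of_hasDerivWithinAt_nonpos hA (fun t ht => (hder t ht).continuousWithinAt)
    (fun t ht => (hder t (interior_subset ht)).mono interior_subset) fun t _ => ?_
  have := S.Q_nonneg p.1 (s t).1
  linarith

/-- On solutions the augmented function is the Lyapunov function. -/
lemma W_eq (p : St n m N M C) {s : ℝ → St n m N M C} (hs : S.Sol s) {t : ℝ}
    (ht : t ∈ Ici (0:ℝ)) : S.W p (s t) = S.V p (s t) := by
  unfold W
  rw [Finset.sum_eq_zero, add_zero]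
  intro i hi
  rw [hs.alg t ht i (Finset.mem_compl.1 hi), norm_zero]

/-- Invariance of a small ball. -/
lemma invariance {p : St n m N M C} (hp : S.Eq p) {ε : ℝ} (hε : 0 < ε)
    (hK : Metric.closedBall p ε ⊆ S.Dom) :
    ∃ U : Set (St n m N M C), IsOpen U ∧ p ∈ U ∧ ∀ s, S.Sol s → s 0 ∈ U →
      ∀ t ∈ Ici (0:ℝ), s t ∈ Metric.closedBall p ε := by
  obtain ⟨c, hc, hc'⟩ := sep (isCompact_closedBall p ε) ((S.cont_W p).mono hK)
    (fun q hq hne => S.W_pos hp (hK hq) hne) hε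
  have hat : ContinuousAt (S.V p) p := (S.cont_V p).continuousAt (S.isOpen_dom.mem_nhds hp.dom)
  have hev : ∀ᶠ q in 𝓝 p, S.V p q < c := hat.eventually (gt_mem_nhds (by rwa [S.V_self]))
  obtain ⟨r, hr, hr'⟩ := Metric.eventually_nhds_iff.1 hev
  refine ⟨Metric.ball p (min r ε), Metric.isOpen_ball, Metric.mem_ball_self (lt_min hr hε), ?_⟩
  intro s hs h0
  have h0r : dist (s 0) p < r := lt_of_lt_of_le h0 (min_le_left _ _)
  have h0ε : dist (s 0) p < ε := lt_of_lt_of_le h0 (min_le_right _ _)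
  by_contra hcon
  push Not at hcon
  obtain ⟨t₁, ht₁, hout⟩ := hcon
  have ht₁0 : (0:ℝ) ≤ t₁ := ht₁
  have hfc : ContinuousOn (fun t => dist (s t) p) (Icc 0 t₁) :=
    continuous_dist.comp_continuousOn
      (ContinuousOn.prodMk (hs.cont.mono Icc_subset_Ici_self) continuousOn_const)
  have hcl : IsCompact (Icc 0 t₁ ∩ (fun t => dist (s t) p) ⁻¹' (Ici ε)) :=
    isCompact_Icc.of_isClosed_subset
      (hfc.preimage_isClosed_of_isClosed isClosed_Icc isClosed_Ici) inter_subset_left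
  have hne : (Icc 0 t₁ ∩ (fun t => dist (s t) p) ⁻¹' (Ici ε)).Nonempty :=
    ⟨t₁, ⟨ht₁0, le_rfl⟩, by
      rw [Metric.mem_closedBall, not_le] at hout; exact hout.le⟩
  obtain ⟨T, ⟨hT, hTε⟩, hmin⟩ := hcl.exists_isLeast hne
  have hTε' : ε ≤ dist (s T) p := hTε
  have hT0 : 0 < T := by
    rcases hT.1.eq_or_lt with h | h
    · rw [← h] at hTε'; linarith
    · exact h
  have hlt : ∀ t ∈ Ico 0 T, dist (s t) p < ε := by
    intro t ht
    by_contra hge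
    exact absurd (hmin ⟨⟨ht.1, ht.2.le.trans hT.2⟩, not_lt.1 hge⟩) (not_le.2 ht.2)
  have hTle : dist (s T) p ≤ ε := by
    have hcT : ContinuousWithinAt (fun t => dist (s t) p) (Ico 0 T) T :=
      (hfc T hT).mono (fun t ht => ⟨ht.1, ht.2.le.trans hT.2⟩)
    have hcl : T ∈ closure (Ico 0 T) := by
      rw [closure_Ico hT0.ne]; exact ⟨hT0.le, le_rfl⟩
    have := hcT.mem_closure hcl (t := Iic ε) (fun t ht => (hlt t ht).le)
    rwa [isClosed_Iic.closure_eq] at this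
  have hin : ∀ t ∈ Icc 0 T, s t ∈ S.Dom := by
    intro t ht
    refine hK ?_
    rcases ht.2.eq_or_lt with h | h
    · rw [h]; exact hTle
    · exact (hlt t ⟨ht.1, h⟩).le
  have hV := S.V_anti hp hs (convex_Icc 0 T) Icc_subset_Ici_self hin
    (left_mem_Icc.2 hT0.le) (right_mem_Icc.2 hT0.le) hT0.le
  have hV0 : S.V p (s 0) < c := hr' h0r
  have hW : S.W p (s T) < c := by
    rw [S.W_eq p hs hT0.le]; exact lt_of_le_of_lt hV hV0
  have := hc' (s T) hTle hW
  linarith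

/-- Projection onto the differential variables. -/
noncomputable def prj (I1 : Finset (Fin N)) (s : St n m N M C) : St n m N M C :=
  (fun i => if i ∈ I1 then s.1 i else 0, s.2)

/-- Vector field of the differential variables. -/
noncomputable def P (s : St n m N M C) : St n m N M C :=
  (fun i => if i ∈ I1 then S.F i s else 0, fun k => S.E k s, fun c => S.X c s)

lemma prj_deriv {s : ℝ → St n m N M C} (hs : S.Sol s) {t : ℝ} (ht : t ∈ Ici (0:ℝ)) :
    HasDerivWithinAt (fun τ => prj I1 (s τ)) (S.P (s t)) (Ici 0) t := by
  refine HasDerivWithinAt.prodMk (hasDerivWithinAt_pi.2 fun i => ?_)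
    (HasDerivWithinAt.prodMk (hasDerivWithinAt_pi.2 fun k => hs.η t ht k)
      (hasDerivWithinAt_pi.2 fun c => hs.ξ t ht c))
  by_cases hi : i ∈ I1
  · simpa [hi] using hs.x t ht i hi
  · simpa [hi] using hasDerivWithinAt_const t (Ici (0:ℝ)) (0 : Fin n → ℝ)

lemma cont_P : ContinuousOn S.P S.Dom := by
  refine ContinuousOn.prodMk (continuousOn_pi.2 fun i => ?_)
    (ContinuousOn.prodMk (continuousOn_pi.2 fun k => S.cont_E k)
      (continuousOn_pi.2 fun c => S.cont_X c))
  by_cases hi : i ∈ I1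
  · simpa [hi] using S.cont_F i
  · simpa [hi] using continuousOn_const

lemma cont_prj : Continuous (prj (n := n) (m := m) (M := M) (C := C) I1) := by
  refine Continuous.prodMk (continuous_pi fun i => ?_) (by fun_prop)
  by_cases hi : i ∈ I1
  · simp only [hi, if_true]; fun_prop
  · simp only [hi, if_false]; fun_prop

/-- Bounded solutions are uniformly continuous. -/
lemma unif {s : ℝ → St n m N M C} (hs : S.Sol s) {K : Set (St n m N M C)} (hKc : IsCompact K)
    (hK : K ⊆ S.Dom) (hin : ∀ t ∈ Ici (0:ℝ), s t ∈ K) : UniformContinuousOn s (Ici 0) := by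
  let K' := K ∩ {q | ∀ i ∈ I1ᶜ, S.F i q = 0}
  have hK' : IsCompact K' := by
    have hc : ContinuousOn (fun q => ∑ i ∈ I1ᶜ, ‖S.F i q‖) K :=
      (continuousOn_finsetSum _ fun i _ => (S.cont_F i).norm).mono hK
    have h1 := hc.preimage_isClosed_of_isClosed hKc.isClosed (isClosed_singleton (x := (0:ℝ)))
    refine hKc.of_isClosed_subset ?_ inter_subset_left
    convert h1 using 1
    ext q
    refine and_congr Iff.rfl ?_
    change (∀ i ∈ I1ᶜ, S.F i q = 0) ↔ ∑ i ∈ I1ᶜ, ‖S.F i q‖ = 0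
    rw [Finset.sum_eq_zero_iff_of_nonneg (fun i _ => norm_nonneg _)]
    simp only [norm_eq_zero]
  refine unif_of_inj hK' (f := prj I1) cont_prj.continuousOn ?_ (A := Ici 0)
    (fun t ht => ⟨hin t ht, fun i hi => hs.alg t ht i (Finset.mem_compl.1 hi)⟩) ?_
  · rintro q ⟨hq, hq'⟩ r ⟨hr, hr'⟩ h
    have h2 : (prj I1 q).2 = (prj I1 r).2 := by rw [h]
    change q.2 = r.2 at h2
    refine Prod.ext (funext fun i => ?_) h2
    by_cases hi : i ∈ I1
    · have := congrFun (congrArg (fun w : St n m N M C => w.1) h) i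
      simpa [prj, hi] using this
    · refine S.alg_inj (hK hr) (hK hq) h2 i ?_
      rw [hq' i (Finset.mem_compl.2 hi), hr' i (Finset.mem_compl.2 hi)]
  · obtain ⟨c, hc⟩ := hKc.exists_bound_of_continuousOn (S.cont_P.mono hK)
    have hl : LipschitzOnWith c.toNNReal (fun t => prj I1 (s t)) (Ici 0) := by
      refine (convex_Ici (0:ℝ)).lipschitzOnWith_of_nnnorm_hasDerivWithin_le
        (fun t ht => S.prj_deriv hs ht) fun t ht => ?_
      rw [← NNReal.coe_le_coe, coe_nnnorm]
      exact (hc _ (hin t ht)).trans (Real.le_coe_toNNReal c)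
    exact hl.uniformContinuousOn

lemma unif_comp {Y : Type*} [UniformSpace Y] {s : ℝ → St n m N M C}
    {K : Set (St n m N M C)} (hKc : IsCompact K) (hin : ∀ t ∈ Ici (0:ℝ), s t ∈ K)
    (hu : UniformContinuousOn s (Ici 0)) {f : St n m N M C → Y} (hf : ContinuousOn f K) :
    UniformContinuousOn (fun t => f (s t)) (Ici 0) :=
  (hKc.uniformContinuousOn_of_continuous hf).comp hu hin

/-- Convergence of solutions remaining in a compact ball. -/
lemma converge {p : St n m N M C} (hp : S.Eq p) {ε : ℝ} (hε : 0 < ε)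
    (hK : Metric.closedBall p ε ⊆ S.Dom) {s : ℝ → St n m N M C} (hs : S.Sol s)
    (hin : ∀ t ∈ Ici (0:ℝ), s t ∈ Metric.closedBall p ε) :
    ∃ q, S.Eq q ∧ Tendsto s atTop (𝓝 q) := by
  have hKc := isCompact_closedBall p ε
  have hu := S.unif hs hKc hK hin
  have hder := fun t ht => S.V_deriv hp hs ht (hK (hin t ht))
  have hanti := S.V_anti hp hs (convex_Ici 0) subset_rfl fun t ht => hK (hin t ht)
  -- `V` converges
  have hVlim : ∃ L, Tendsto (fun t => S.V p (s t)) atTop (𝓝 L) := by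
    have ha : Antitone (fun t => S.V p (s (max t 0))) := fun a b hab =>
      hanti (le_max_right a 0) (le_max_right b 0) (max_le_max_right 0 hab)
    have hb : BddBelow (range fun t => S.V p (s (max t 0))) :=
      ⟨0, by rintro _ ⟨t, rfl⟩; exact S.V_nonneg hp.dom (hK (hin _ (le_max_right t 0)))⟩
    refine ⟨_, (tendsto_atTop_ciInf ha hb).congr' ?_⟩
    filter_upwards [eventually_ge_atTop 0] with t ht
    rw [max_eq_left ht]
  obtain ⟨L, hL⟩ := hVlim
  have hQ : Tendsto (fun t => S.Q p.1 (s t).1) atTop (𝓝 0) := by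
    have h1 : UniformContinuousOn (fun t => - S.Q p.1 (s t).1) (Ici 0) :=
      unif_comp hKc hin hu ((S.cont_Q p.1).mono hK).neg
    simpa using (barbalat hder hL h1).neg
  have hxball : ∀ x ∈ Metric.closedBall p.1 ε, ∀ i, x i ∈ S.Ωn := by
    intro x hx
    have h : (x, p.2) ∈ Metric.closedBall p ε := by
      rw [Metric.mem_closedBall, Prod.dist_eq]
      simp only [dist_self]
      exact max_le hx hε.le
    exact (hK h).1
  have hx : Tendsto (fun t => (s t).1) atTop (𝓝 p.1) := by
    refine sep_tendsto (isCompact_closedBall p.1 ε) ((S.cont_Qx p.1).mono hxball)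
      (fun x hx hne => S.Q_pos hp.dom.1 (hxball x hx) hne) (fun t ht => ?_) hQ
    have := hin t ht
    rw [Metric.mem_closedBall, Prod.dist_eq] at this
    exact (le_max_left _ _).trans this
  have hF : ∀ i, Tendsto (fun t => S.F i (s t)) atTop (𝓝 0) := by
    intro i
    by_cases hi : i ∈ I1
    · exact barbalat (fun t ht => hs.x t ht i hi) ((continuous_apply i).continuousAt.tendsto.comp hx)
        (unif_comp hKc hin hu ((S.cont_F i).mono hK))
    · refine tendsto_const_nhds.congr' ?_
      filter_upwards [eventually_ge_atTop 0] with t ht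
      exact (hs.alg t ht i hi).symm
  obtain ⟨q, hq, φ, hφ, hlim⟩ := hKc.tendsto_subseq (x := fun j : ℕ => s j)
    (fun j => hin j (mem_Ici.2 (Nat.cast_nonneg j)))
  have hφ' : Tendsto (fun j => ((φ j : ℕ) : ℝ)) atTop atTop :=
    tendsto_natCast_atTop_atTop.comp hφ.tendsto_atTop
  have hq1 : q.1 = p.1 :=
    tendsto_nhds_unique ((continuous_fst.tendsto q).comp hlim) (hx.comp hφ')
  have hlimK : Tendsto (fun j => s (φ j : ℕ)) atTop (𝓝[Metric.closedBall p ε] q) :=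
    tendsto_nhdsWithin_iff.2 ⟨hlim, Eventually.of_forall fun j => hin _ (mem_Ici.2 (Nat.cast_nonneg _))⟩
  have hqE : S.Eq q := by
    refine ⟨hK hq, fun i => ?_, fun i => ?_⟩
    · exact tendsto_nhds_unique ((((S.cont_F i).mono hK) q hq).tendsto.comp hlimK)
        ((hF i).comp hφ')
    · rw [hq1]; exact hp.out i
  refine ⟨q, hqE, ?_⟩
  have hanti' := S.V_anti hqE hs (convex_Ici 0) subset_rfl fun t ht => hK (hin t ht)
  have hVj : Tendsto (fun j => S.V q (s (φ j : ℕ))) atTop (𝓝 0) := by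
    have := (((S.cont_V q).mono hK) q hq).tendsto.comp hlimK
    rwa [S.V_self] at this
  have hVq : Tendsto (fun t => S.V q (s t)) atTop (𝓝 0) := by
    rw [Metric.tendsto_nhds]
    intro ε' hε'
    obtain ⟨j, hj⟩ := (hVj.eventually (gt_mem_nhds hε')).exists
    filter_upwards [eventually_ge_atTop ((φ j : ℕ) : ℝ)] with t ht
    have h0 : (0:ℝ) ≤ (φ j : ℕ) := Nat.cast_nonneg _
    have ht0 : (0:ℝ) ≤ t := h0.trans ht
    rw [Real.dist_0_eq_abs, abs_of_nonneg (S.V_nonneg hqE.dom (hK (hin t ht0)))]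
    exact lt_of_le_of_lt (hanti' h0 ht0 ht) hj
  refine sep_tendsto hKc ((S.cont_W q).mono hK) (fun r hr hne => S.W_pos hqE (hK hr) hne) hin ?_
  refine hVq.congr' ?_
  filter_upwards [eventually_ge_atTop 0] with t ht
  exact (S.W_eq q hs ht).symm

theorem main {p : St n m N M C} (hp : S.Eq p) :
    ∃ U : Set (St n m N M C), IsOpen U ∧ p ∈ U ∧ ∀ s, S.Sol s → s 0 ∈ U →
      ∃ q, S.Eq q ∧ Tendsto s atTop (𝓝 q) := by
  obtain ⟨ε, hε, hK⟩ := Metric.nhds_basis_closedBall.mem_iff.1 (S.isOpen_dom.mem_nhds hp.dom)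
  obtain ⟨U, hU, hpU, h⟩ := S.invariance hp hε hK
  exact ⟨U, hU, hpU, fun s hs h0 => S.converge hp hε hK hs (h s hs h0)⟩

end Net

/-- Theorem 2: under the feasibility condition, the decentralized
integral controller `ξ̇_i = y* − G_iᵀ∇H_{n,i}(x_i)`, `u_i = ξ_i` at the nodes of
`I₁₁ ∪ I₂₁` locally achieves output agreement on the prescribed set point `y*`:
every closed-loop solution starting in a suitable open set `U` around
`(x̄, η̄, ξ̄)` converges to a closed-loop equilibrium at which
`G_iᵀ∇H_{n,i}(x̃_i) = y*` for every node `i`. -/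
theorem output_agreement_decentralized_integral_control
    {n m N M : ℕ} (hn : 0 < n) (hm : 0 < m) (hN : 0 < N) (hM : 0 < M)
    (B : Matrix (Fin N) (Fin M) ℝ)
    (hB1 : ∀ k, ∑ i, B i k = 0)
    (hBker : LinearMap.ker (Matrix.mulVecLin Bᵀ) =
      Submodule.span ℝ {(fun _ => (1 : ℝ) : Fin N → ℝ)})
    (J R : Fin N → Matrix (Fin n) (Fin n) ℝ)
    (hJ : ∀ i, (J i)ᵀ = -(J i)) (hR : ∀ i, (R i).PosDef)
    (G : Fin N → Matrix (Fin n) (Fin m) ℝ)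
    (hGrank : ∀ i, LinearMap.ker (Matrix.mulVecLin (G i)) = ⊥)
    (δ : Fin N → Fin m → ℝ)
    (Ωn : Set (Fin n → ℝ)) (hΩno : IsOpen Ωn) (hΩnc : Convex ℝ Ωn)
    (Ωe : Set (Fin m → ℝ)) (hΩeo : IsOpen Ωe) (hΩec : Convex ℝ Ωe)
    (Hn : Fin N → (Fin n → ℝ) → ℝ)
    (hHnC : ∀ i, ContDiffOn ℝ 1 (Hn i) Ωn)
    (hHnconv : ∀ i, StrictConvexOn ℝ Ωn (Hn i))
    (He : Fin M → (Fin m → ℝ) → ℝ)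
    (hHeC : ∀ k, ContDiffOn ℝ 1 (He k) Ωe)
    (hHeconv : ∀ k, StrictConvexOn ℝ Ωe (He k))
    -- partition of the node set, with I₁₁ nonempty:
    (I11 I12 I21 I22 : Finset (Fin N))
    (hpart : I11 ∪ I12 ∪ I21 ∪ I22 = Finset.univ)
    (h1112 : Disjoint I11 I12) (h1121 : Disjoint I11 I21)
    (h1122 : Disjoint I11 I22) (h1221 : Disjoint I12 I21)
    (h1222 : Disjoint I12 I22) (h2122 : Disjoint I21 I22)
    (hI11 : I11.Nonempty)
    -- the prescribed set point:
    (ystar : Fin m → ℝ)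
    -- the feasibility condition (a), (b), (c):
    (xbar : Fin N → Fin n → ℝ) (ηbar : Fin M → Fin m → ℝ)
    (d : Fin N → Fin m → ℝ)
    (hxbar : ∀ i, xbar i ∈ Ωn) (hηbar : ∀ k, ηbar k ∈ Ωe)
    (hfeasa : ∀ i, (G i)ᵀ *ᵥ grad (Hn i) (xbar i) = ystar)
    (hfeasb : ∀ i ∈ I11 ∪ I21, (0 : Fin n → ℝ) =
      (J i - R i) *ᵥ grad (Hn i) (xbar i)
        - (G i) *ᵥ (∑ k, B i k • grad (He k) (ηbar k)) + (G i) *ᵥ d i)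
    (hfeasc : ∀ i ∈ I12 ∪ I22, (0 : Fin n → ℝ) =
      (J i - R i) *ᵥ grad (Hn i) (xbar i)
        - (G i) *ᵥ (∑ k, B i k • grad (He k) (ηbar k)) + (G i) *ᵥ δ i)
    -- the steady-state controller value ξ̄:
    (ξbar : {i // i ∈ I11 ∪ I21} → Fin m → ℝ)
    (hξbar : ∀ i, ξbar i = d i.1 - δ i.1) :
    ∃ U : Set ((Fin N → Fin n → ℝ) × (Fin M → Fin m → ℝ) ×
      ({i // i ∈ I11 ∪ I21} → Fin m → ℝ)),
      IsOpen U ∧ (xbar, ηbar, ξbar) ∈ U ∧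
      ∀ (x : ℝ → Fin N → Fin n → ℝ) (η : ℝ → Fin M → Fin m → ℝ)
        (ξ : ℝ → {i // i ∈ I11 ∪ I21} → Fin m → ℝ),
        -- (x, η, ξ) is a solution of the closed-loop system on [0, ∞):
        ContinuousOn (fun t => (x t, η t, ξ t)) (Ici 0) →
        (∀ t ∈ Ici (0 : ℝ), ∀ k,
          HasDerivWithinAt (fun s => η s k)
            (∑ i, B i k • ((G i)ᵀ *ᵥ grad (Hn i) (x t i))) (Ici 0) t) →
        (∀ t ∈ Ici (0 : ℝ), ∀ i, ∀ hi : i ∈ I11,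
          HasDerivWithinAt (fun s => x s i)
            ((J i - R i) *ᵥ grad (Hn i) (x t i)
              - (G i) *ᵥ (∑ k, B i k • grad (He k) (η t k))
              + (G i) *ᵥ (ξ t ⟨i, Finset.mem_union_left _ hi⟩ + δ i))
            (Ici 0) t) →
        (∀ t ∈ Ici (0 : ℝ), ∀ i ∈ I12,
          HasDerivWithinAt (fun s => x s i)
            ((J i - R i) *ᵥ grad (Hn i) (x t i)
              - (G i) *ᵥ (∑ k, B i k • grad (He k) (η t k)) + (G i) *ᵥ δ i)
            (Ici 0) t) →
        (∀ t ∈ Ici (0 : ℝ), ∀ i, ∀ hi : i ∈ I21,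
          (0 : Fin n → ℝ) = (J i - R i) *ᵥ grad (Hn i) (x t i)
            - (G i) *ᵥ (∑ k, B i k • grad (He k) (η t k))
            + (G i) *ᵥ (ξ t ⟨i, Finset.mem_union_right _ hi⟩ + δ i)) →
        (∀ t ∈ Ici (0 : ℝ), ∀ i ∈ I22,
          (0 : Fin n → ℝ) = (J i - R i) *ᵥ grad (Hn i) (x t i)
            - (G i) *ᵥ (∑ k, B i k • grad (He k) (η t k)) + (G i) *ᵥ δ i) →
        -- the decentralized integral controller dynamics:
        (∀ t ∈ Ici (0 : ℝ), ∀ i : {i // i ∈ I11 ∪ I21},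
          HasDerivWithinAt (fun s => ξ s i)
            (ystar - (G i.1)ᵀ *ᵥ grad (Hn i.1) (x t i.1)) (Ici 0) t) →
        -- starting in U:
        (x 0, η 0, ξ 0) ∈ U →
        -- convergence to a closed-loop equilibrium with outputs equal to y*:
        ∃ (xt : Fin N → Fin n → ℝ) (ηt : Fin M → Fin m → ℝ)
          (ξt : {i // i ∈ I11 ∪ I21} → Fin m → ℝ),
          (∀ i, xt i ∈ Ωn) ∧ (∀ k, ηt k ∈ Ωe) ∧
          (∀ k, ∑ i, B i k • ((G i)ᵀ *ᵥ grad (Hn i) (xt i)) = 0) ∧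
          (∀ i, ∀ hi : i ∈ I11, (0 : Fin n → ℝ) =
            (J i - R i) *ᵥ grad (Hn i) (xt i)
              - (G i) *ᵥ (∑ k, B i k • grad (He k) (ηt k))
              + (G i) *ᵥ (ξt ⟨i, Finset.mem_union_left _ hi⟩ + δ i)) ∧
          (∀ i ∈ I12, (0 : Fin n → ℝ) =
            (J i - R i) *ᵥ grad (Hn i) (xt i)
              - (G i) *ᵥ (∑ k, B i k • grad (He k) (ηt k)) + (G i) *ᵥ δ i) ∧
          (∀ i, ∀ hi : i ∈ I21, (0 : Fin n → ℝ) =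
            (J i - R i) *ᵥ grad (Hn i) (xt i)
              - (G i) *ᵥ (∑ k, B i k • grad (He k) (ηt k))
              + (G i) *ᵥ (ξt ⟨i, Finset.mem_union_right _ hi⟩ + δ i)) ∧
          (∀ i ∈ I22, (0 : Fin n → ℝ) =
            (J i - R i) *ᵥ grad (Hn i) (xt i)
              - (G i) *ᵥ (∑ k, B i k • grad (He k) (ηt k)) + (G i) *ᵥ δ i) ∧
          Tendsto x atTop (𝓝 xt) ∧ Tendsto η atTop (𝓝 ηt) ∧
          Tendsto ξ atTop (𝓝 ξt) ∧
          ∀ i, (G i)ᵀ *ᵥ grad (Hn i) (xt i) = ystar := by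
  have hall : ∀ i, i ∈ I11 ∨ i ∈ I12 ∨ i ∈ I21 ∨ i ∈ I22 := by
    intro i
    have : i ∈ I11 ∪ I12 ∪ I21 ∪ I22 := by rw [hpart]; exact Finset.mem_univ i
    simp only [Finset.mem_union] at this
    tauto
  let S : Net n m N M (I11 ∪ I21) (I11 ∪ I12) :=
    { B := B, hB1 := hB1, J := J, R := R, hJ := hJ, hR := hR, G := G, δ := δ, Ωn := Ωn,
      hΩno := hΩno, Ωe := Ωe, hΩeo := hΩeo, Hn := Hn, hHnC := hHnC, hHnconv := hHnconv,
      He := He, hHeC := hHeC, hHeconv := hHeconv, ystar := ystar }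
  have hFc : ∀ (s : St n m N M (I11 ∪ I21)) (i : Fin N) (hi : i ∈ I11 ∪ I21),
      S.F i s = (J i - R i) *ᵥ grad (Hn i) (s.1 i)
        - (G i) *ᵥ (∑ k, B i k • grad (He k) (s.2.1 k)) + (G i) *ᵥ (s.2.2 ⟨i, hi⟩ + δ i) := by
    intro s i hi
    simp only [Net.F, Net.ext, dif_pos hi, S]
  have hFu : ∀ (s : St n m N M (I11 ∪ I21)) (i : Fin N) (_ : i ∉ I11 ∪ I21),
      S.F i s = (J i - R i) *ᵥ grad (Hn i) (s.1 i)
        - (G i) *ᵥ (∑ k, B i k • grad (He k) (s.2.1 k)) + (G i) *ᵥ δ i := by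
    intro s i hi
    simp only [Net.F, Net.ext, dif_neg hi, S, zero_add]
  have hn12 : ∀ i ∈ I12, i ∉ I11 ∪ I21 := by
    intro i hi h
    rcases Finset.mem_union.1 h with h | h
    · exact Finset.disjoint_left.1 h1112 h hi
    · exact Finset.disjoint_left.1 h1221 hi h
  have hn22 : ∀ i ∈ I22, i ∉ I11 ∪ I21 := by
    intro i hi h
    rcases Finset.mem_union.1 h with h | h
    · exact Finset.disjoint_left.1 h1122 h hi
    · exact Finset.disjoint_left.1 h2122 h hi
  have hcase : ∀ i, i ∉ I11 ∪ I21 → i ∈ I12 ∪ I22 := by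
    intro i hi
    have := hall i
    simp only [Finset.mem_union] at hi ⊢
    tauto
  have hp : S.Eq (xbar, ηbar, ξbar) := by
    refine ⟨⟨hxbar, hηbar⟩, fun i => ?_, hfeasa⟩
    by_cases hi : i ∈ I11 ∪ I21
    · rw [hFc _ i hi]
      have h1 : ξbar ⟨i, hi⟩ + δ i = d i := by rw [hξbar]; simp
      simp only [h1]
      exact (hfeasb i hi).symm
    · rw [hFu _ i hi]
      exact (hfeasc i (hcase i hi)).symm
  obtain ⟨U, hU, hpU, hmain⟩ := S.main hp
  refine ⟨U, hU, hpU, ?_⟩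
  intro x η ξ hcont hη hx11 hx12 hx21 hx22 hξ h0
  have hsol : S.Sol (fun t => (x t, η t, ξ t)) := by
    refine ⟨hcont, fun t ht i hi => ?_, fun t ht i hi => ?_, hη, hξ⟩
    · by_cases h : i ∈ I11
      · rw [hFc _ i (Finset.mem_union_left _ h)]
        exact hx11 t ht i h
      · have h' : i ∈ I12 := (Finset.mem_union.1 hi).resolve_left h
        rw [hFu _ i (hn12 i h')]
        exact hx12 t ht i h'
    · simp only [Finset.mem_union, not_or] at hi
      by_cases h : i ∈ I21
      · rw [hFc _ i (Finset.mem_union_right _ h)]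
        exact (hx21 t ht i h).symm
      · have h' : i ∈ I22 := by
          have := hall i
          tauto
        rw [hFu _ i (hn22 i h')]
        exact (hx22 t ht i h').symm
  obtain ⟨q, hq, hlim⟩ := hmain _ hsol h0
  refine ⟨q.1, q.2.1, q.2.2, hq.dom.1, hq.dom.2, fun k => ?_, fun i hi => ?_, fun i hi => ?_,
    fun i hi => ?_, fun i hi => ?_, (continuous_fst.tendsto q).comp hlim,
    ((continuous_fst.comp continuous_snd).tendsto q).comp hlim,
    ((continuous_snd.comp continuous_snd).tendsto q).comp hlim, hq.out⟩
  · have h1 : ∀ i, (G i)ᵀ *ᵥ grad (Hn i) (q.1 i) = ystar := hq.out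
    simp only [h1]
    rw [← Finset.sum_smul, hB1 k, zero_smul]
  · rw [← hFc q i (Finset.mem_union_left _ hi)]
    exact (hq.F i).symm
  · rw [← hFu q i (hn12 i hi)]
    exact (hq.F i).symm
  · rw [← hFc q i (Finset.mem_union_right _ hi)]
    exact (hq.F i).symm
  · rw [← hFu q i (hn22 i hi)]
    exact (hq.F i).symm
end
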